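/- For a natural unit interval graph G = ([n],E), with s(G) = [b_2]_q···[b_n]_q (b_i the number of neighbours of i smaller than i) and s_k(G) = Σ q^{inv_G(list(T_1)·list(T_2))}, summed over pairs of decreasing trees T_1, T_2 with V(T_1) ⊔ V(T_2) = [n], 1 ∈ V(T_1), |V(T_2)| = k, the coefficient of e_{(n-k,k)} in X_G(x;q) for 1 ≤ k < n/2 equals [n-k]_q([k]_q s_k(G) - s(G)) + [k]_q([n-k]_q s_{n-k}(G) - s(G)). -/

import Mathlib

noncomputable def qint (m : ℕ) : Polynomial ℤ := ∑ i ∈ Finset.range m, Polynomial.X ^ i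

/-- `G` is a natural unit interval graph. -/
def IsNUIG {n : ℕ} (G : SimpleGraph (Fin n)) : Prop :=
  ∀ i j k : Fin n, i < j → j < k → G.Adj i k → G.Adj i j ∧ G.Adj j k

/-- The number of ascents of a colouring. -/
noncomputable def ascNum {n : ℕ} (G : SimpleGraph (Fin n)) {N : ℕ} (κ : Fin n → Fin N) : ℕ :=
  Nat.card {p : Fin n × Fin n // p.1 < p.2 ∧ G.Adj p.1 p.2 ∧ κ p.1 < κ p.2}

/-- The chromatic quasisymmetric function `X_G(x;q)` in the variables `x_1, …, x_N`. -/
noncomputable def cqf {n : ℕ} (G : SimpleGraph (Fin n)) (N : ℕ) :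
    MvPolynomial (Fin N) (Polynomial ℤ) :=
  ∑ᶠ (κ : Fin n → Fin N) (_ : ∀ i j, G.Adj i j → κ i ≠ κ j),
    MvPolynomial.C (Polynomial.X ^ ascNum G κ) * ∏ i, MvPolynomial.X (κ i)

/-- A subgraph `T` of `G` is a decreasing subtree. -/
def IsDecreasingTree {n : ℕ} (G : SimpleGraph (Fin n)) (T : G.Subgraph) : Prop :=
  T.verts.Nonempty ∧ T.coe.IsTree ∧
    ∀ v ∈ T.verts, (∃ u ∈ T.verts, v < u) → ∃! w : Fin n, v < w ∧ T.Adj v w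

/-- `l` is the reading order `list(T)` of the subtree `T`. -/
def IsReadList {n : ℕ} {G : SimpleGraph (Fin n)} (T : G.Subgraph) (l : List (Fin n)) :
    Prop :=
  l.Nodup ∧ (∀ v : Fin n, v ∈ l ↔ v ∈ T.verts) ∧
    (∀ h0 : 0 < l.length, ∀ v ∈ T.verts, l.get ⟨0, h0⟩ ≤ v) ∧
    ∀ t : ℕ, ∀ ht : t < l.length, 0 < t →
      IsLeast {v : Fin n | v ∈ T.verts ∧ v ∉ l.take t ∧ ∃ u ∈ l.take t, T.Adj u v}
        (l.get ⟨t, ht⟩)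

/-- `l` is the reading list of some decreasing subtree of `G`. -/
def IsDecTreeList {n : ℕ} (G : SimpleGraph (Fin n)) (l : List (Fin n)) : Prop :=
  ∃ T : G.Subgraph, IsDecreasingTree G T ∧ IsReadList T l

/-- `inv_G(σ)`. -/
noncomputable def invG {n : ℕ} (G : SimpleGraph (Fin n)) (l : List (Fin n)) : ℕ :=
  Nat.card {p : Fin l.length × Fin l.length //
    p.1 < p.2 ∧ l.get p.2 < l.get p.1 ∧ G.Adj (l.get p.2) (l.get p.1)}

/-- `b_i`: the number of neighbours of `i` smaller than `i`. -/
noncomputable def bG {n : ℕ} (G : SimpleGraph (Fin n)) (i : Fin n) : ℕ :=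
  Nat.card {j : Fin n // j < i ∧ G.Adj j i}

/-- `s(G) = [b_2]_q ⋯ [b_n]_q`. -/
noncomputable def sG {n : ℕ} (G : SimpleGraph (Fin n)) : Polynomial ℤ :=
  ∏ i ∈ Finset.univ.filter (fun i : Fin n => (i : ℕ) ≠ 0), qint (bG G i)

/-- `s_k(G) = Σ q^{inv_G(list(T₁)·list(T₂))}` over pairs of decreasing trees `T₁, T₂`
with `V(T₁) ⊔ V(T₂) = [n]`, `1 ∈ V(T₁)` and `|V(T₂)| = k`; a pair is encoded by the
concatenated list `l = list(T₁) ++ list(T₂)`, split at position `n - k`. -/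
noncomputable def skG {n : ℕ} (G : SimpleGraph (Fin n)) (hn : 0 < n) (k : ℕ) :
    Polynomial ℤ :=
  ∑ᶠ (l : List (Fin n)) (_ : l.Nodup ∧ l.toFinset = Finset.univ ∧
      IsDecTreeList G (l.take (n - k)) ∧ IsDecTreeList G (l.drop (n - k)) ∧
      (⟨0, hn⟩ : Fin n) ∈ l.take (n - k)),
    (Polynomial.X : Polynomial ℤ) ^ invG G l

/-!
Let `(f * g)(S) = ∑_{S = A ⊔ B} q ^ asc(A, B) f(A) g(B)` on functions of vertex sets. The
coefficient of `x ^ α` in `X_G` is the value at `[n]` of the product of the indicators of the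
independent sets of sizes `α 1, α 2, …`. These indicators commute and play the part of the
elementary symmetric functions: Newton's identities hold with `S ↦ [m]_q s(G|_S)`, `#S = m`, up to
sign, as power sums.

The change of basis between products of the `e_m` and monomials is symmetric, so the coefficient of
`e_μ` in `X_G` is the value at `[n]` of the element corresponding to the monomial symmetric
function `m_μ`. For `μ = (a, b)` with `a ≠ b` we have `m_μ = p_a p_b - p_{a + b}`, whence the
coefficient `[a]_q [b]_q (s_a * s_b)([n]) - [n]_q s(G)`, where `s_m` is `S ↦ s(G|_S)` on the sets
of size `m`.

Restricting a function to the sets containing the vertex `1` is a derivation of the algebra. It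
splits `s_a * s_b`, and a commutator identity puts the factor whose set contains `1` on the right,
at the cost of `(q - 1) s(G)`. Finally `s(G|_S)` is the sum of `q ^ inv` over the reading words of
the decreasing trees on `S`, by insertion of the largest vertex, so the two remaining products are
`s_k(G)` and `s_{n - k}(G)`.
-/

open Finset

section ElementaryDuality

open MvPolynomial

variable {σ τ R : Type*} [Fintype σ] [Fintype τ] [CommSemiring R]

lemma coeff_prod_X [DecidableEq τ] {ι : Type*} (s : Finset ι) (f : ι → τ) (α : τ →₀ ℕ) :
    coeff α (∏ i ∈ s, X (f i) : MvPolynomial τ R) =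
      if ∀ c, #{i ∈ s | f i = c} = α c then 1 else 0 := by
  have hprod : (∏ i ∈ s, X (f i) : MvPolynomial τ R) =
      monomial (∑ i ∈ s, Finsupp.single (f i) 1) 1 := (monomial_sum_one s _).symm
  rw [hprod, coeff_monomial]
  refine if_congr ?_ rfl rfl
  simp [Finsupp.ext_iff, Finsupp.finsetSum_apply, Finsupp.single_apply]

lemma coeff_prod_esymm [DecidableEq σ] [DecidableEq τ] (μ : σ → ℕ) (α : τ →₀ ℕ) :
    coeff α (∏ j, esymm τ R (μ j)) =
      #{p : σ → Finset τ | (∀ j, #(p j) = μ j) ∧ ∀ i, #{j | i ∈ p j} = α i} := by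
  have hfib : ∀ (p : σ → Finset τ) (i : τ), #{x ∈ univ.sigma p | x.2 = i} = #{j | i ∈ p j} := by
    refine fun p i => card_bij' (fun x _ => x.1) (fun j _ => ⟨j, i⟩) ?_ ?_ (by aesop) (by simp)
    · rintro ⟨j, i'⟩ hx
      simp only [mem_filter, mem_sigma] at hx
      simpa [hx.2] using hx.1
    · simp
  calc coeff α (∏ j, esymm τ R (μ j))
    _ = ∑ p ∈ Fintype.piFinset fun j => powersetCard (μ j) univ,
          coeff α (∏ j, ∏ i ∈ p j, X i : MvPolynomial τ R) := by
        simp only [esymm, prod_univ_sum, coeff_sum]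
    _ = ∑ p : σ → Finset τ with (∀ j, #(p j) = μ j),
          if ∀ i, #{j | i ∈ p j} = α i then (1 : R) else 0 := by
        refine sum_congr (by ext; simp [mem_powersetCard]) fun p _ => ?_
        rw [prod_sigma' univ p fun _ i => (X i : MvPolynomial τ R), coeff_prod_X]
        simp only [hfib]
    _ = _ := by rw [sum_boole, filter_filter]

lemma coeff_prod_esymm_comm (μ : σ →₀ ℕ) (α : τ →₀ ℕ) :
    coeff α (∏ j, esymm τ R (μ j)) = coeff μ (∏ i, esymm σ R (α i)) := by
  classical
  rw [coeff_prod_esymm, coeff_prod_esymm]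
  congr 1
  refine card_bij' (fun p _ i => {j | i ∈ p j}) (fun p _ j => {i | j ∈ p i}) ?_ ?_ ?_ ?_
  · intro p hp
    simpa [and_comm] using hp
  · intro p hp
    simpa [and_comm] using hp
  · intro p _; ext; simp
  · intro p _; ext; simp

end ElementaryDuality

section PartitionExponents

lemma ofFn_getD {l : List ℕ} {n : ℕ} (hl : l.length ≤ n) :
    List.ofFn (fun i : Fin n => l.getD i 0) = l ++ List.replicate (n - l.length) 0 := by
  refine List.ext_getElem (by simp [hl]) fun i _ _ => ?_
  rw [List.getElem_ofFn, List.getElem_append, List.getD_eq_getElem?_getD]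
  split_ifs with h <;> simp_all

variable {n : ℕ}

/-- The parts of `μ`, in some order, followed by zeros, as an exponent vector of length `n`. -/
noncomputable def partExp (μ : n.Partition) : Fin n →₀ ℕ :=
  Finsupp.equivFunOnFinite.symm fun i => μ.parts.toList.getD i 0

lemma support_map_partExp (μ : n.Partition) :
    (partExp μ).support.val.map (partExp μ) = μ.parts := by
  have hlen : μ.parts.toList.length ≤ n := by
    rw [Multiset.length_toList]
    have h := Multiset.card_nsmul_le_sum (s := μ.parts) (a := 1) fun x hx => μ.parts_pos hx
    simpa [μ.parts_sum] using h
  have hval : univ.val.map (partExp μ) = μ.parts + Multiset.replicate (n - μ.parts.card) 0 := by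
    rw [Fin.univ_val_map, partExp, Finsupp.coe_equivFunOnFinite_symm, ofFn_getD hlen,
      ← Multiset.coe_add, Multiset.coe_toList, Multiset.length_toList, Multiset.coe_replicate]
  have hsupp : (partExp μ).support = univ.filter fun i => partExp μ i ≠ 0 := by ext; simp
  calc (partExp μ).support.val.map (partExp μ)
    _ = (univ.val.map (partExp μ)).filter (· ≠ 0) := by
      rw [hsupp, filter_val, Multiset.filter_map]; rfl
    _ = μ.parts := by
      rw [hval, Multiset.filter_add, Multiset.filter_eq_self.2 fun x hx => (μ.parts_pos hx).ne',
        Multiset.filter_eq_nil.2 fun x hx => by simp [Multiset.eq_of_mem_replicate hx], add_zero]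

lemma prod_partExp {M : Type*} [CommMonoid M] {f : ℕ → M} (hf : f 0 = 1) (μ : n.Partition) :
    ∏ i, f (partExp μ i) = (μ.parts.map f).prod := by
  rw [← support_map_partExp, Multiset.map_map]
  refine (prod_subset (subset_univ (partExp μ).support) fun i _ hi => ?_).symm
  rw [Finsupp.notMem_support_iff.1 hi, hf]

end PartitionExponents

section TwoPartMonomials

open MvPolynomial

variable {σ : Type*} {a b : ℕ}

lemma support_map_eq_pair_iff (ha : a ≠ 0) (hb : b ≠ 0) {α : σ →₀ ℕ} :
    α.support.val.map α = {a, b} ↔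
      ∃ i j, i ≠ j ∧ Finsupp.single i a + Finsupp.single j b = α := by
  classical
  constructor
  · intro h
    obtain ⟨i, hi, rfl, hrest⟩ := (Multiset.map_eq_cons _ _ _ _).2 h
    obtain ⟨j, hj, rfl⟩ := Multiset.map_eq_singleton.1 hrest
    have herase : α.support.erase i = {j} := val_inj.1 (by rw [erase_val, hj, singleton_val])
    have hsupp : α.support = {i, j} := by rw [← insert_erase hi, herase]
    have hij : i ≠ j := fun h => notMem_erase i α.support (by rw [herase, h, mem_singleton])
    refine ⟨i, j, hij, ?_⟩
    conv_rhs => rw [← α.sum_single, Finsupp.sum, hsupp, sum_pair hij]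
  · rintro ⟨i, j, hij, rfl⟩
    have hsupp : (Finsupp.single i a + Finsupp.single j b).support = {i, j} := by
      ext k
      simp only [Finsupp.mem_support_iff, Finsupp.add_apply, Finsupp.single_apply, mem_insert,
        mem_singleton]
      split_ifs <;> simp_all [eq_comm]
    rw [hsupp, insert_val_of_notMem (by simpa using hij)]
    simp [hij, hij.symm]

lemma psum_mul_psum_sub {R : Type*} [Fintype σ] [DecidableEq σ] [CommRing R] :
    psum σ R a * psum σ R b - psum σ R (a + b) =
      ∑ p : σ × σ with p.1 ≠ p.2, monomial (Finsupp.single p.1 a + Finsupp.single p.2 b) 1 := by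
  have hmul : ∀ p : σ × σ, (X p.1 ^ a * X p.2 ^ b : MvPolynomial σ R) =
      monomial (Finsupp.single p.1 a + Finsupp.single p.2 b) 1 := fun p => by
    rw [X_pow_eq_monomial, X_pow_eq_monomial, monomial_mul, one_mul]
  have hdiag : ({p | p.1 = p.2} : Finset (σ × σ)) = univ.diag := by ext; simp
  rw [psum, psum, sum_mul_sum, ← sum_product', univ_product_univ, sub_eq_iff_eq_add']
  simp_rw [hmul]
  rw [← sum_filter_add_sum_filter_not univ fun p : σ × σ => p.1 = p.2, hdiag, sum_diag]
  simp [psum, X_pow_eq_monomial, ← Finsupp.single_add]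

lemma coeff_psum_mul_psum_sub {R : Type*} [Fintype σ] [CommRing R] (ha : a ≠ 0) (hb : b ≠ 0)
    (hab : a ≠ b) (α : σ →₀ ℕ) :
    coeff α (psum σ R a * psum σ R b - psum σ R (a + b)) =
      if α.support.val.map α = {a, b} then 1 else 0 := by
  classical
  rw [psum_mul_psum_sub, coeff_sum, sum_filter]
  simp only [coeff_monomial]
  split_ifs with h
  · obtain ⟨i, j, hij, rfl⟩ := (support_map_eq_pair_iff ha hb).1 h
    rw [sum_eq_single (i, j), if_pos hij, if_pos rfl]
    · rintro ⟨i', j'⟩ - hne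
      refine ite_eq_right_iff.2 fun _ => if_neg fun h => hne ?_
      have := (Finsupp.single_add_single_eq_single_add_single ha hb).1 h
      aesop
    · simp
  · refine sum_eq_zero fun p _ => ite_eq_right_iff.2 fun hp => if_neg fun heq => h ?_
    exact (support_map_eq_pair_iff ha hb).2 ⟨p.1, p.2, hp, heq⟩

end TwoPartMonomials

open Polynomial

section Splittings

variable {V M : Type*} [DecidableEq V] [AddCommMonoid M]

/-- The sum of `F A B` over the ordered splittings `S = A ⊔ B`. -/
def splitSum (S : Finset V) (F : Finset V → Finset V → M) : M :=
  ∑ A ∈ S.powerset, F A (S \ A)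

lemma splitSum_congr {S : Finset V} {F H : Finset V → Finset V → M}
    (h : ∀ A B, Disjoint A B → A ∪ B = S → F A B = H A B) : splitSum S F = splitSum S H :=
  sum_congr rfl fun _ hA => h _ _ disjoint_sdiff (union_sdiff_of_subset (mem_powerset.1 hA))

lemma splitSum_eq_zero {S : Finset V} {F : Finset V → Finset V → M}
    (h : ∀ A B, Disjoint A B → A ∪ B = S → F A B = 0) : splitSum S F = 0 :=
  (splitSum_congr h).trans sum_const_zero

lemma splitSum_add (S : Finset V) (F H : Finset V → Finset V → M) :
    (splitSum S fun A B => F A B + H A B) = splitSum S F + splitSum S H :=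
  sum_add_distrib

@[simp] lemma splitSum_empty (F : Finset V → Finset V → M) : splitSum ∅ F = F ∅ ∅ := by
  simp [splitSum]

lemma splitSum_insert {v : V} {S : Finset V} (hv : v ∉ S) (F : Finset V → Finset V → M) :
    splitSum (insert v S) F = splitSum S fun A B => F (insert v A) B + F A (insert v B) := by
  rw [splitSum, sum_powerset_insert hv, add_comm, ← sum_add_distrib]
  refine sum_congr rfl fun A hA => ?_
  have hvA : v ∉ A := fun h => hv (mem_powerset.1 hA h)
  rw [insert_sdiff_of_notMem _ hvA, insert_sdiff_insert, sdiff_insert_of_notMem hv]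

lemma splitSum_swap (S : Finset V) (F : Finset V → Finset V → M) :
    (splitSum S fun A B => F B A) = splitSum S F := by
  induction S using Finset.induction_on generalizing F with
  | empty => simp
  | insert v S hv ih =>
    rw [splitSum_insert hv, splitSum_insert hv, ← ih fun A B => F (insert v A) B + F A (insert v B)]
    exact splitSum_congr fun A B _ _ => add_comm _ _

lemma splitSum_assoc (S : Finset V) (F : Finset V → Finset V → Finset V → M) :
    (splitSum S fun T C => splitSum T fun A B => F A B C) =
      splitSum S fun A T => splitSum T fun B C => F A B C := by
  induction S using Finset.induction_on generalizing F with
  | empty => simp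
  | insert v S hv ih =>
    have hsplit : ∀ A B, Disjoint A B → A ∪ B = S → v ∉ A ∧ v ∉ B := by
      rintro A B - rfl; simpa using hv
    calc (splitSum (insert v S) fun T C => splitSum T fun A B => F A B C)
      _ = splitSum S fun T C => splitSum T fun A B =>
            F (insert v A) B C + F A (insert v B) C + F A B (insert v C) := by
          rw [splitSum_insert hv]
          refine splitSum_congr fun T C hTC hS => ?_
          rw [splitSum_insert (hsplit T C hTC hS).1, splitSum_add T (fun A B => _ + _)]
      _ = splitSum S fun A T => splitSum T fun B C =>
            F (insert v A) B C + F A (insert v B) C + F A B (insert v C) := ih _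
      _ = splitSum (insert v S) fun A T => splitSum T fun B C => F A B C := by
          rw [splitSum_insert hv]
          refine splitSum_congr fun A T hAT hS => ?_
          rw [splitSum_insert (hsplit A T hAT hS).2, ← splitSum_add]
          simp only [add_assoc]

lemma splitSum_single_left {S : Finset V} {F : Finset V → Finset V → M}
    (h : ∀ A B, A ≠ ∅ → F A B = 0) : splitSum S F = F ∅ S := by
  rw [splitSum, sum_eq_single ∅ (fun A _ hA => h A _ hA) (by simp), sdiff_empty]

end Splittings

lemma mul_splitSum {V R : Type*} [DecidableEq V] [NonUnitalNonAssocSemiring R] (c : R)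
    (S : Finset V) (F : Finset V → Finset V → R) :
    c * splitSum S F = splitSum S fun A B => c * F A B :=
  mul_sum ..

lemma splitSum_mul {V R : Type*} [DecidableEq V] [NonUnitalNonAssocSemiring R] (c : R)
    (S : Finset V) (F : Finset V → Finset V → R) :
    splitSum S F * c = splitSum S fun A B => F A B * c :=
  sum_mul ..

section AscBetween

variable {V : Type*} [LinearOrder V] {G : SimpleGraph V} [DecidableRel G.Adj]

/-- The number of edges `{a, b}` of `G` with `a ∈ A`, `b ∈ B` and `a < b`. -/
def ascBetween (G : SimpleGraph V) [DecidableRel G.Adj] (A B : Finset V) : ℕ :=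
  ∑ a ∈ A, ∑ b ∈ B, if a < b ∧ G.Adj a b then 1 else 0

@[simp] lemma ascBetween_empty_left (A : Finset V) : ascBetween G ∅ A = 0 := by
  simp [ascBetween]

@[simp] lemma ascBetween_empty_right (A : Finset V) : ascBetween G A ∅ = 0 := by
  simp [ascBetween]

lemma ascBetween_union_left {A B C : Finset V} (h : Disjoint A B) :
    ascBetween G (A ∪ B) C = ascBetween G A C + ascBetween G B C :=
  sum_union h

lemma ascBetween_union_right {A B C : Finset V} (h : Disjoint B C) :
    ascBetween G A (B ∪ C) = ascBetween G A B + ascBetween G A C := by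
  simp [ascBetween, sum_union h, sum_add_distrib]

end AscBetween

/-- The algebra of `ℤ[q]`-valued functions on the finite sets of vertices, with the product
`(f * g)(S) = ∑_{S = A ⊔ B} q ^ asc(A, B) f(A) g(B)`; the graph is recorded in the type because
the product depends on it. -/
def SetAlg {V : Type*} (_G : SimpleGraph V) : Type _ := Finset V → ℤ[X]

namespace SetAlg

section Module

variable {V : Type*} {G : SimpleGraph V}

noncomputable instance : AddCommGroup (SetAlg G) :=
  inferInstanceAs (AddCommGroup (Finset V → ℤ[X]))

noncomputable instance : Module ℤ[X] (SetAlg G) :=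
  inferInstanceAs (Module ℤ[X] (Finset V → ℤ[X]))

@[ext] lemma ext {f g : SetAlg G} (h : ∀ S, f S = g S) : f = g := funext h

@[simp] lemma add_apply (f g : SetAlg G) (S : Finset V) : (f + g) S = f S + g S := rfl

@[simp] lemma sub_apply (f g : SetAlg G) (S : Finset V) : (f - g) S = f S - g S := rfl

@[simp] lemma neg_apply (f : SetAlg G) (S : Finset V) : (-f) S = -f S := rfl

@[simp] lemma zero_apply (S : Finset V) : (0 : SetAlg G) S = 0 := rfl

@[simp] lemma smul_apply (r : ℤ[X]) (f : SetAlg G) (S : Finset V) : (r • f) S = r * f S := rfl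

lemma sum_apply {ι : Type*} (s : Finset ι) (f : ι → SetAlg G) (S : Finset V) :
    (∑ i ∈ s, f i) S = ∑ i ∈ s, f i S :=
  Finset.sum_apply (M := fun _ : Finset V => ℤ[X]) S s f

/-- The part of `f` supported on the sets of size `m`. -/
noncomputable def grade (f : SetAlg G) (m : ℕ) : SetAlg G :=
  fun S => if #S = m then f S else 0

lemma grade_apply (f : SetAlg G) (m : ℕ) (S : Finset V) :
    grade f m S = if #S = m then f S else 0 := rfl

end Module

section Ring

variable {V : Type*} [LinearOrder V] {G : SimpleGraph V}

noncomputable instance : One (SetAlg G) := ⟨fun S => if S = ∅ then 1 else 0⟩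

lemma one_apply (S : Finset V) : (1 : SetAlg G) S = if S = ∅ then 1 else 0 := rfl

variable [DecidableRel G.Adj]

noncomputable instance : Mul (SetAlg G) :=
  ⟨fun f g S => splitSum S fun A B => X ^ ascBetween G A B * f A * g B⟩

lemma mul_apply (f g : SetAlg G) (S : Finset V) :
    (f * g) S = splitSum S fun A B => X ^ ascBetween G A B * f A * g B := rfl

lemma mul_assoc_apply (f g h : SetAlg G) (S : Finset V) :
    (f * g * h) S = (f * (g * h)) S := by
  simp only [mul_apply, mul_splitSum, splitSum_mul]
  trans splitSum S fun T C => splitSum T fun A B =>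
    X ^ (ascBetween G A B + ascBetween G A C + ascBetween G B C) * f A * g B * h C
  · refine splitSum_congr fun T C _ _ => splitSum_congr fun A B hAB hT => ?_
    rw [← hT, ascBetween_union_left hAB]
    ring
  · rw [splitSum_assoc]
    refine splitSum_congr fun A T _ _ => splitSum_congr fun B C hBC hT => ?_
    rw [← hT, ascBetween_union_right hBC]
    ring

noncomputable instance : Ring (SetAlg G) where
  left_distrib f g h := by ext1 S; simp only [mul_apply, add_apply, mul_add, splitSum_add]
  right_distrib f g h := by
    ext1 S; simp only [mul_apply, add_apply, mul_add, add_mul, splitSum_add]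
  zero_mul f := by ext1 S; simp [mul_apply, splitSum]
  mul_zero f := by ext1 S; simp [mul_apply, splitSum]
  mul_assoc f g h := by ext1 S; exact mul_assoc_apply f g h S
  one_mul f := by
    ext1 S
    rw [mul_apply, splitSum_single_left fun A B hA => by simp [one_apply, hA]]
    simp [one_apply]
  mul_one f := by
    ext1 S
    rw [mul_apply, ← splitSum_swap, splitSum_single_left fun A B hA => by simp [one_apply, hA]]
    simp [one_apply]
  neg_add_cancel := neg_add_cancel
  zsmul := fun z f => z • f
  zsmul_zero' := SubNegMonoid.zsmul_zero'
  zsmul_succ' := SubNegMonoid.zsmul_succ'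
  zsmul_neg' := SubNegMonoid.zsmul_neg'

noncomputable instance : Algebra ℤ[X] (SetAlg G) :=
  Algebra.ofModule
    (fun r f g => by
      ext1 S; simp only [mul_apply, smul_apply, mul_splitSum]
      exact splitSum_congr fun _ _ _ _ => by ring)
    (fun r f g => by
      ext1 S; simp only [mul_apply, smul_apply, mul_splitSum]
      exact splitSum_congr fun _ _ _ _ => by ring)

lemma sum_grade_mul_grade (f g : SetAlg G) (m : ℕ) :
    ∑ p ∈ antidiagonal m, grade f p.1 * grade g p.2 = grade (f * g) m := by
  ext1 S
  simp only [sum_apply, mul_apply, splitSum]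
  have hcard : ∀ A ∈ S.powerset, ((#A, #(S \ A)) ∈ antidiagonal m ↔ #S = m) := fun A hA => by
    rw [HasAntidiagonal.mem_antidiagonal, add_comm, card_sdiff_add_card_eq_card (mem_powerset.1 hA)]
  calc ∑ p ∈ antidiagonal m, ∑ A ∈ S.powerset,
        X ^ ascBetween G A (S \ A) * grade f p.1 A * grade g p.2 (S \ A)
    _ = ∑ A ∈ S.powerset, ∑ p ∈ antidiagonal m,
        if (#A, #(S \ A)) = p then X ^ ascBetween G A (S \ A) * f A * g (S \ A) else 0 := by
      rw [sum_comm]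
      refine sum_congr rfl fun A _ => sum_congr rfl fun p _ => ?_
      simp only [grade_apply, Prod.ext_iff]
      split_ifs <;> simp_all
    _ = grade (f * g) m S := by
      rw [grade_apply, mul_apply, splitSum]
      split_ifs with hS
      · exact sum_congr rfl fun A hA => by rw [sum_ite_eq, if_pos ((hcard A hA).2 hS)]
      · exact sum_eq_zero fun A hA => by rw [sum_ite_eq, if_neg (mt (hcard A hA).1 hS)]

end Ring

end SetAlg

section QInt

lemma qint_zero : qint 0 = 0 := by simp [qint]

lemma qint_one : qint 1 = 1 := by simp [qint]

lemma qint_succ (m : ℕ) : qint (m + 1) = qint m + X ^ m := Finset.sum_range_succ _ _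

lemma X_sub_one_ne_zero : (X - 1 : ℤ[X]) ≠ 0 := X_sub_C_ne_zero (1 : ℤ)

lemma X_sub_one_mul_qint (m : ℕ) : (X - 1) * qint m = X ^ m - 1 := mul_geom_sum X m

lemma qint_add (a b : ℕ) : qint (a + b) = qint a + X ^ a * qint b := by
  apply mul_left_cancel₀ X_sub_one_ne_zero
  rw [X_sub_one_mul_qint]
  linear_combination -(X_sub_one_mul_qint a) - X ^ a * X_sub_one_mul_qint b

lemma qint_succ' (m : ℕ) : qint (m + 1) = 1 + X * qint m := by
  rw [add_comm, qint_add, qint_one, pow_one]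

lemma qint_ne_zero {m : ℕ} (hm : m ≠ 0) : qint m ≠ 0 := by
  intro h
  have := X_sub_one_mul_qint m
  rw [h, mul_zero, eq_comm, sub_eq_zero] at this
  exact hm (by simpa using congrArg natDegree this)

end QInt

section DegIn

variable {V : Type*} {G : SimpleGraph V} [DecidableRel G.Adj]

/-- The number of neighbours of `v` in `A`. -/
def degIn (G : SimpleGraph V) [DecidableRel G.Adj] (v : V) (A : Finset V) : ℕ :=
  #{a ∈ A | G.Adj a v}

@[simp] lemma degIn_empty (v : V) : degIn G v ∅ = 0 := by simp [degIn]

lemma degIn_eq_zero {v : V} {A : Finset V} : degIn G v A = 0 ↔ ∀ a ∈ A, ¬ G.Adj a v := by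
  simp [degIn, filter_eq_empty_iff]

lemma degIn_insert [DecidableEq V] {v w : V} {A : Finset V} (h : w ∉ A) :
    degIn G v (insert w A) = (if G.Adj w v then 1 else 0) + degIn G v A := by
  simp only [degIn, card_filter, sum_insert h]

lemma degIn_union [DecidableEq V] {v : V} {A B : Finset V} (h : Disjoint A B) :
    degIn G v (A ∪ B) = degIn G v A + degIn G v B := by
  rw [degIn, filter_union, card_union_of_disjoint (disjoint_filter_filter h), degIn, degIn]

end DegIn

section AscBetweenInsert

variable {V : Type*} [LinearOrder V] {G : SimpleGraph V} [DecidableRel G.Adj] {v : V}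
  {A B : Finset V}

lemma ascBetween_insert_left_of_lt (hA : v ∉ A) (hB : ∀ b ∈ B, b < v) :
    ascBetween G (insert v A) B = ascBetween G A B := by
  rw [ascBetween, sum_insert hA, ← ascBetween, add_eq_right]
  exact sum_eq_zero fun b hb => by simp [(hB b hb).not_gt]

lemma ascBetween_insert_right_of_lt (hA : ∀ a ∈ A, a < v) (hB : v ∉ B) :
    ascBetween G A (insert v B) = ascBetween G A B + degIn G v A := by
  simp only [ascBetween, degIn, card_filter, ← sum_add_distrib]
  refine sum_congr rfl fun a ha => ?_
  rw [sum_insert hB, add_comm]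
  simp [hA a ha]

lemma ascBetween_insert_left_of_gt (hA : v ∉ A) (hB : ∀ b ∈ B, v < b) :
    ascBetween G (insert v A) B = ascBetween G A B + degIn G v B := by
  rw [ascBetween, sum_insert hA, ← ascBetween, add_comm, degIn, card_filter]
  congr 1
  exact sum_congr rfl fun b hb => by simp [hB b hb, G.adj_comm]

lemma ascBetween_insert_right_of_gt (hA : ∀ a ∈ A, v < a) (hB : v ∉ B) :
    ascBetween G A (insert v B) = ascBetween G A B := by
  refine sum_congr rfl fun a ha => ?_
  rw [sum_insert hB]
  simp [(hA a ha).not_gt]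

end AscBetweenInsert

section NbrClique

/-- The neighbours of `v` in `S` form a clique. -/
def NbrClique {V : Type*} (G : SimpleGraph V) (v : V) (S : Finset V) : Prop :=
  G.IsClique {a | a ∈ S ∧ G.Adj a v}

lemma NbrClique.subset {V : Type*} {G : SimpleGraph V} {v : V} {S T : Finset V}
    (h : NbrClique G v S) (hT : T ⊆ S) : NbrClique G v T :=
  SimpleGraph.IsClique.subset (fun _ ha => And.imp_left (@hT _) ha) h

variable {n : ℕ} {G : SimpleGraph (Fin n)} {v : Fin n} {S : Finset (Fin n)}

lemma IsNUIG.nbrClique_of_lt (hG : IsNUIG G) (hS : ∀ a ∈ S, a < v) : NbrClique G v S := by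
  rintro a ⟨ha, hav⟩ b ⟨hb, hbv⟩ hab
  rcases lt_or_gt_of_ne hab with h | h
  · exact (hG a b v h (hS b hb) hav).1
  · exact (hG b a v h (hS a ha) hbv).1.symm

lemma IsNUIG.nbrClique_of_gt (hG : IsNUIG G) (hS : ∀ a ∈ S, v < a) : NbrClique G v S := by
  rintro a ⟨ha, hav⟩ b ⟨hb, hbv⟩ hab
  rcases lt_or_gt_of_ne hab with h | h
  · exact (hG v a b (hS a ha) h hbv.symm).2
  · exact (hG v b a (hS b hb) h hav.symm).2.symm

end NbrClique

namespace SetAlg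

section IndepInd

variable {V : Type*} [DecidableEq V] {G : SimpleGraph V} [DecidableRel G.Adj] {v : V}
  {A : Finset V}

/-- The indicator function of the independent sets. -/
noncomputable def indepInd (G : SimpleGraph V) [DecidableRel G.Adj] : SetAlg G :=
  fun A => if G.IsIndepSet A then 1 else 0

@[simp] lemma indepInd_empty : indepInd G ∅ = 1 := by simp [indepInd]

@[simp] lemma indepInd_singleton : indepInd G {v} = 1 := by simp [indepInd]

lemma indepInd_of_not (h : ¬ G.IsIndepSet A) : indepInd G A = 0 := if_neg h

lemma indepInd_insert (v : V) (A : Finset V) :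
    indepInd G (insert v A) = if degIn G v A = 0 then indepInd G A else 0 := by
  have : G.IsIndepSet (insert v A : Finset V) ↔ degIn G v A = 0 ∧ G.IsIndepSet A := by
    rw [← SimpleGraph.isClique_compl, coe_insert, SimpleGraph.isClique_insert,
      SimpleGraph.isClique_compl, and_comm, degIn_eq_zero]
    refine and_congr_left' (forall₂_congr fun a _ => ?_)
    rw [SimpleGraph.compl_adj, G.adj_comm]
    exact ⟨fun h hadj => (h hadj.ne').2 hadj, fun h hne => ⟨hne, h⟩⟩
  simp only [indepInd, this, ite_and]

/-- The indicator function of the independent sets of size `m`, playing the part of the `m`-th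
elementary symmetric function. -/
noncomputable def indep (G : SimpleGraph V) [DecidableRel G.Adj] (m : ℕ) : SetAlg G :=
  grade (indepInd G) m

end IndepInd

end SetAlg

open SetAlg

section TwoColourings

variable {V : Type*} [LinearOrder V] {G : SimpleGraph V} [DecidableRel G.Adj] {v w p : V}
  {A S : Finset V}

lemma NbrClique.degIn_le_one (h : NbrClique G v A) (hA : G.IsIndepSet A) : degIn G v A ≤ 1 := by
  refine card_le_one.2 fun a ha b hb => ?_
  by_contra hab
  rw [mem_filter] at ha hb
  exact hA ha.1 hb.1 hab (h ha hb hab)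

lemma NbrClique.indepInd_insert (h : NbrClique G v A) :
    indepInd G (insert v A) = (1 - qint (degIn G v A)) * indepInd G A := by
  rw [SetAlg.indepInd_insert]
  by_cases hA : G.IsIndepSet A
  · obtain hd | hd : degIn G v A = 0 ∨ degIn G v A = 1 := by have := h.degIn_le_one hA; omega
    · simp [hd, qint_zero]
    · simp [hd, qint_one]
  · simp [indepInd_of_not hA]

/-- The sum of `q ^ asc F(a, b)` over the proper colourings of `S` with two colours, where `a` and
`b` are the numbers of vertices of the first and of the second colour. -/
noncomputable def twoColSum (G : SimpleGraph V) [DecidableRel G.Adj] (F : ℕ → ℕ → ℤ[X])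
    (S : Finset V) : ℤ[X] :=
  splitSum S fun A B => X ^ ascBetween G A B * (indepInd G A * indepInd G B) * F #A #B

lemma twoColSum_insert (hw : ∀ a ∈ S, a < w) (F : ℕ → ℕ → ℤ[X]) :
    twoColSum G F (insert w S) = splitSum S fun A B => X ^ ascBetween G A B *
      (indepInd G (insert w A) * indepInd G B * F (#A + 1) #B +
        X ^ degIn G w A * indepInd G A * indepInd G (insert w B) * F #A (#B + 1)) := by
  have hwS : w ∉ S := fun h => (hw w h).false
  rw [twoColSum, splitSum_insert hwS]
  refine splitSum_congr ?_
  rintro A B - rfl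
  simp only [mem_union, not_or] at hwS
  rw [ascBetween_insert_left_of_lt hwS.1 fun b hb => hw b (mem_union_right _ hb),
    ascBetween_insert_right_of_lt (fun a ha => hw a (mem_union_left _ ha)) hwS.2,
    card_insert_of_notMem hwS.1, card_insert_of_notMem hwS.2]
  ring

lemma twoColSum_insert_of_degIn_eq_zero (hw : ∀ a ∈ S, a < w) (hd : degIn G w S = 0)
    (F : ℕ → ℕ → ℤ[X]) :
    twoColSum G F (insert w S) = twoColSum G (fun a b => F (a + 1) b + F a (b + 1)) S := by
  rw [twoColSum_insert hw]
  refine splitSum_congr fun A B hAB hS => ?_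
  rw [← hS, degIn_union hAB, Nat.add_eq_zero_iff] at hd
  rw [indepInd_insert, indepInd_insert, if_pos hd.1, if_pos hd.2, hd.1]
  ring

lemma twoColSum_insert_insert (hp : ∀ a ∈ S, a < p) (hpw : p < w) (hadj : G.Adj p w)
    (hd : degIn G w S = 0) (hc : NbrClique G p S) (F : ℕ → ℕ → ℤ[X]) :
    twoColSum G F (insert w (insert p S)) =
      (1 + X - qint (degIn G p S)) * twoColSum G (fun a b => F (a + 1) (b + 1)) S := by
  have hpS : p ∉ S := fun h => (hp p h).false
  have hw : ∀ a ∈ insert p S, a < w :=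
    forall_mem_insert _ _ _ |>.2 ⟨hpw, fun a ha => (hp a ha).trans hpw⟩
  rw [twoColSum_insert hw, splitSum_insert hpS, twoColSum, mul_splitSum]
  refine splitSum_congr ?_
  rintro A B hAB rfl
  simp only [mem_union, not_or] at hpS
  rw [degIn_union hAB, Nat.add_eq_zero_iff] at hd
  simp only [indepInd_insert w, degIn_insert hpS.1, degIn_insert hpS.2, hadj, hd, if_true,
    add_zero, one_ne_zero, if_false]
  rw [ascBetween_insert_left_of_lt hpS.1 fun b hb => hp b (mem_union_right _ hb),
    ascBetween_insert_right_of_lt (fun a ha => hp a (mem_union_left _ ha)) hpS.2,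
    card_insert_of_notMem hpS.1, card_insert_of_notMem hpS.2,
    (hc.subset subset_union_left).indepInd_insert, (hc.subset subset_union_right).indepInd_insert,
    degIn_union hAB, qint_add]
  linear_combination X ^ ascBetween G A B * indepInd G A * indepInd G B * F (#A + 1) (#B + 1) *
    ((qint_succ (degIn G p A)).symm.trans (qint_succ' (degIn G p A)))

lemma twoColSum_eq_zero_of_isClique {K : Finset V} (hK : G.IsClique K) (hKS : K ⊆ S)
    (hcard : 2 < #K) (F : ℕ → ℕ → ℤ[X]) : twoColSum G F S = 0 := by
  have hsub : ∀ A : Finset V, G.IsIndepSet A → #(K ∩ A) ≤ 1 := fun A hA => by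
    refine card_le_one.2 fun a ha b hb => ?_
    by_contra hab
    rw [mem_inter] at ha hb
    exact hA ha.2 hb.2 hab (hK ha.1 hb.1 hab)
  refine splitSum_eq_zero fun A B _ hS => ?_
  suffices h : ¬ G.IsIndepSet A ∨ ¬ G.IsIndepSet B by
    rcases h with h | h <;> simp [indepInd_of_not h]
  by_contra! h
  have hle := card_union_le (K ∩ A) (K ∩ B)
  rw [← inter_union_distrib_left, hS, inter_eq_left.2 hKS] at hle
  have := hsub A h.1
  have := hsub B h.2
  omega

lemma indep_mul_indep_apply (i j : ℕ) (S : Finset V) :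
    (indep G i * indep G j) S = twoColSum G (fun a b => if a = i ∧ b = j then 1 else 0) S := by
  rw [mul_apply]
  refine splitSum_congr fun A B _ _ => ?_
  simp only [indep, grade_apply]
  split_ifs <;> simp_all [mul_assoc]

lemma NbrClique.isClique_insert (h : NbrClique G w S) :
    G.IsClique (insert w {a ∈ S | G.Adj a w} : Finset V) := by
  rw [coe_insert, SimpleGraph.isClique_insert, coe_filter]
  exact ⟨h, fun a ha _ => ha.2.symm⟩

end TwoColourings

section Commutation

variable {n : ℕ} {G : SimpleGraph (Fin n)} {w : Fin n} {S : Finset (Fin n)}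

lemma IsNUIG.exists_eq_insert_of_degIn_eq_one [DecidableRel G.Adj] (hG : IsNUIG G)
    (hw : ∀ a ∈ S, a < w) (hd : degIn G w S = 1) :
    ∃ p S', S = insert p S' ∧ (∀ a ∈ S', a < p) ∧ G.Adj p w ∧ degIn G w S' = 0 := by
  obtain ⟨p, hp⟩ := card_eq_one.1 hd
  have hnbr : ∀ a, a ∈ S ∧ G.Adj a w ↔ a = p := fun a => by
    rw [← mem_singleton, ← hp, mem_filter]
  obtain ⟨hpS, hadj⟩ := (hnbr p).2 rfl
  refine ⟨p, S.erase p, (insert_erase hpS).symm, fun a ha => ?_, hadj, degIn_eq_zero.2 ?_⟩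
  · obtain ⟨hne, haS⟩ := mem_erase.1 ha
    by_contra hlt
    have hpa : p < a := lt_of_le_of_ne (not_lt.1 hlt) hne.symm
    exact hne ((hnbr a).1 ⟨haS, (hG p a w hpa (hw a haS) hadj).2⟩)
  · exact fun a ha hadj => (mem_erase.1 ha).1 ((hnbr a).1 ⟨(mem_erase.1 ha).2, hadj⟩)

variable [DecidableRel G.Adj]

lemma IsNUIG.twoColSum_swap (hG : IsNUIG G) (F : ℕ → ℕ → ℤ[X]) (S : Finset (Fin n)) :
    twoColSum G (fun a b => F b a) S = twoColSum G F S := by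
  induction S using Finset.strongInduction generalizing F with
  | H T ih =>
    induction T using Finset.induction_on_max with
    | empty => simp [twoColSum]
    | insert w S hw _ =>
      have hwS : S ⊂ insert w S := ssubset_insert fun h => (hw w h).false
      have hc := hG.nbrClique_of_lt hw
      obtain hd | hd | hd : degIn G w S = 0 ∨ degIn G w S = 1 ∨ 1 < degIn G w S := by omega
      · rw [twoColSum_insert_of_degIn_eq_zero hw hd, twoColSum_insert_of_degIn_eq_zero hw hd,
          ← ih S hwS]
        simp only [add_comm]
      · obtain ⟨p, S', rfl, hp, hadj, hd'⟩ := hG.exists_eq_insert_of_degIn_eq_one hw hd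
        have hcp := hG.nbrClique_of_lt hp
        have hpw := hw p (mem_insert_self p S')
        rw [twoColSum_insert_insert hp hpw hadj hd' hcp,
          twoColSum_insert_insert hp hpw hadj hd' hcp,
          ← ih S' ((subset_insert p S').trans_ssubset hwS)]
      · have hcard : 2 < #(insert w {a ∈ S | G.Adj a w}) := by
          rw [card_insert_of_notMem fun h => (hw w (mem_filter.1 h).1).false]
          exact Nat.succ_lt_succ hd
        have hsub : insert w {a ∈ S | G.Adj a w} ⊆ insert w S :=
          insert_subset_insert w (filter_subset _ _)
        rw [twoColSum_eq_zero_of_isClique hc.isClique_insert hsub hcard,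
          twoColSum_eq_zero_of_isClique hc.isClique_insert hsub hcard]

lemma IsNUIG.indep_commute (hG : IsNUIG G) (i j : ℕ) : Commute (indep G i) (indep G j) := by
  ext1 S
  rw [indep_mul_indep_apply, indep_mul_indep_apply, ← hG.twoColSum_swap]
  simp only [and_comm]

end Commutation

section TreeProducts

/-- The product `s(G|_S)` of the `q`-integers `[b_i]_q`, over all `i ∈ S` but the smallest, for
the graph induced by `G` on `S`. -/
noncomputable def indS {V : Type*} [LinearOrder V] (G : SimpleGraph V) [DecidableRel G.Adj] :
    SetAlg G :=
  fun S => ∏ i ∈ S with ∃ j ∈ S, j < i, qint (degIn G i {j ∈ S | j < i})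

/-- The product `s(G|_S)` with the sign `(-1) ^ (#S + 1)`. -/
noncomputable def signedS {V : Type*} [LinearOrder V] (G : SimpleGraph V) [DecidableRel G.Adj] :
    SetAlg G :=
  fun S => (-1) ^ (#S + 1) * indS G S

/-- The generating function of the analogues of the power sums: the value on a set of size `m` is
`(-1) ^ (m + 1) [m]_q s(G|_S)`. -/
noncomputable def powerSums {V : Type*} [LinearOrder V] (G : SimpleGraph V)
    [DecidableRel G.Adj] : SetAlg G :=
  fun S => qint #S * signedS G S

section LinearOrder

variable {V : Type*} [LinearOrder V] {G : SimpleGraph V} [DecidableRel G.Adj] {v w : V}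
  {S A B : Finset V}

@[simp] lemma indS_singleton (v : V) : indS G {v} = 1 := by
  rw [indS, filter_false_of_mem (by simp), prod_empty]

lemma indS_insert_of_lt (hS : S.Nonempty) (hw : ∀ a ∈ S, a < w) :
    indS G (insert w S) = indS G S * qint (degIn G w S) := by
  have hwS : w ∉ S := fun h => (hw w h).false
  have hfilter : ({i ∈ insert w S | ∃ j ∈ insert w S, j < i} : Finset V) =
      insert w {i ∈ S | ∃ j ∈ S, j < i} := by
    obtain ⟨j, hj⟩ := hS
    rw [filter_insert, if_pos ⟨j, mem_insert_of_mem hj, hw j hj⟩]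
    refine congrArg _ (filter_congr fun i hi => ?_)
    simp [(hw i hi).not_gt]
  rw [indS, hfilter, prod_insert (by simp [hwS]), mul_comm, indS]
  congr 1
  · refine prod_congr rfl fun i hi => ?_
    rw [filter_insert, if_neg (hw i (mem_filter.1 hi).1).not_gt]
  · rw [filter_insert, if_neg (lt_irrefl w), filter_true_of_mem hw]

@[simp] lemma signedS_singleton (v : V) : signedS G {v} = 1 := by simp [signedS]

lemma signedS_insert_of_lt (hS : S.Nonempty) (hw : ∀ a ∈ S, a < w) :
    signedS G (insert w S) = -signedS G S * qint (degIn G w S) := by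
  rw [signedS, indS_insert_of_lt hS hw, card_insert_of_notMem fun h => (hw w h).false, signedS]
  ring

lemma NbrClique.indepInd_insert_sub (hA : NbrClique G v A) (hAB : Disjoint A B) :
    indepInd G (insert v A) - X ^ degIn G v A * qint (degIn G v B) * indepInd G A =
      (1 - qint (degIn G v (A ∪ B))) * indepInd G A := by
  rw [hA.indepInd_insert, degIn_union hAB, qint_add]
  ring

end LinearOrder

variable {n : ℕ} {G : SimpleGraph (Fin n)} [DecidableRel G.Adj] {v : Fin n} {S : Finset (Fin n)}

lemma IsNUIG.indS_insert_of_gt (hG : IsNUIG G) (hS : S.Nonempty) (hv : ∀ a ∈ S, v < a) :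
    indS G (insert v S) = indS G S * qint (degIn G v S) := by
  induction S using Finset.induction_on_max with
  | empty => simp at hS
  | insert w S hw ih =>
    obtain ⟨hvw, hvS⟩ := forall_mem_insert _ _ _ |>.1 hv
    rw [insert_comm, indS_insert_of_lt (insert_nonempty v S)
        (forall_mem_insert _ _ _ |>.2 ⟨hvw, hw⟩), degIn_insert fun h => (hvS v h).false,
      degIn_insert fun h => (hw w h).false]
    rcases S.eq_empty_or_nonempty with rfl | hne
    · simp [G.adj_comm]
    rw [ih hne hvS, indS_insert_of_lt hne hw]
    by_cases hadj : G.Adj v w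
    · have hdv : degIn G v S = #S := by
        rw [degIn, filter_true_of_mem]
        exact fun a ha => (hG v a w (hvS a ha) (hw a ha) hadj).1.symm
      have hdw : degIn G w S = #S := by
        rw [degIn, filter_true_of_mem]
        exact fun a ha => (hG v a w (hvS a ha) (hw a ha) hadj).2
      rw [hdv, hdw, if_pos hadj, if_pos hadj.symm]
    · rw [if_neg hadj, if_neg (mt SimpleGraph.Adj.symm hadj), zero_add, zero_add]
      ring

lemma IsNUIG.signedS_insert_of_gt (hG : IsNUIG G) (hS : S.Nonempty) (hv : ∀ a ∈ S, v < a) :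
    signedS G (insert v S) = -signedS G S * qint (degIn G v S) := by
  rw [signedS, hG.indS_insert_of_gt hS hv, card_insert_of_notMem fun h => (hv v h).false, signedS]
  ring

lemma IsNUIG.powerSums_insert_of_gt (hG : IsNUIG G) (hv : ∀ a ∈ S, v < a) :
    powerSums G (insert v S) =
      signedS G (insert v S) - X * qint (degIn G v S) * powerSums G S := by
  rw [powerSums, powerSums, card_insert_of_notMem fun h => (hv v h).false, qint_succ']
  rcases S.eq_empty_or_nonempty with rfl | hne
  · simp [qint_zero]
  · rw [hG.signedS_insert_of_gt hne hv]
    ring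

lemma IsNUIG.splitSum_indepInd_mul_signedS_insert (hG : IsNUIG G) (hv : ∀ a ∈ S, v < a) :
    (splitSum S fun A B => X ^ ascBetween G A B * indepInd G A * signedS G (insert v B)) =
      indepInd G (insert v S) := by
  induction S using Finset.induction_on_max with
  | empty => simp
  | insert w S hw ih =>
    obtain ⟨hvw, hvS⟩ := forall_mem_insert _ _ _ |>.1 hv
    have hlt : ∀ a ∈ insert v S, a < w := forall_mem_insert _ _ _ |>.2 ⟨hvw, hw⟩
    have hwS : w ∉ S := fun h => (hw w h).false
    have hc := hG.nbrClique_of_lt hlt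
    rw [insert_comm, hc.indepInd_insert, ← ih hvS, mul_splitSum, splitSum_insert hwS]
    refine splitSum_congr ?_
    rintro A B hAB rfl
    simp only [mem_union, not_or] at hwS
    have hvA : v ∉ A := fun h => (hvS v (mem_union_left _ h)).false
    have hindep := (hc.subset (subset_union_left.trans (subset_insert v (A ∪ B)))
      ).indepInd_insert_sub (disjoint_insert_right.2 ⟨hvA, hAB⟩)
    rw [union_insert] at hindep
    rw [ascBetween_insert_left_of_lt hwS.1 fun b hb => hw b (mem_union_right _ hb),
      ascBetween_insert_right_of_lt (fun a ha => hw a (mem_union_left _ ha)) hwS.2,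
      insert_comm v w, signedS_insert_of_lt (insert_nonempty v B) fun b hb =>
        hlt b (insert_subset_insert v subset_union_right hb)]
    linear_combination X ^ ascBetween G A B * signedS G (insert v B) * hindep

lemma IsNUIG.indepInd_mul_powerSums (hG : IsNUIG G) (S : Finset (Fin n)) :
    (indepInd G * powerSums G) S = #S * indepInd G S := by
  rw [mul_apply]
  induction S using Finset.induction_on_min with
  | empty => simp [powerSums, qint_zero]
  | insert v S hv ih =>
    have hvS : v ∉ S := fun h => (hv v h).false
    have hc := hG.nbrClique_of_gt hv
    have hsum : (#(insert v S) : ℤ[X]) * indepInd G (insert v S) = splitSum S fun A B =>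
        (1 - qint (degIn G v S)) * (X ^ ascBetween G A B * indepInd G A * powerSums G B) +
          X ^ ascBetween G A B * indepInd G A * signedS G (insert v B) := by
      rw [splitSum_add, ← mul_splitSum, ih, hG.splitSum_indepInd_mul_signedS_insert hv,
        hc.indepInd_insert, card_insert_of_notMem hvS]
      push_cast
      ring
    rw [hsum, splitSum_insert hvS]
    refine splitSum_congr ?_
    rintro A B hAB rfl
    simp only [mem_union, not_or] at hvS
    have hvB : ∀ b ∈ B, v < b := fun b hb => hv b (mem_union_right _ hb)
    have hqint := (qint_succ (degIn G v B)).symm.trans (qint_succ' (degIn G v B))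
    rw [ascBetween_insert_left_of_gt hvS.1 hvB,
      ascBetween_insert_right_of_gt (fun a ha => hv a (mem_union_left _ ha)) hvS.2,
      (hc.subset subset_union_left).indepInd_insert, hG.powerSums_insert_of_gt hvB,
      degIn_union hAB, add_comm (degIn G v A), qint_add]
    linear_combination X ^ ascBetween G A B * indepInd G A * powerSums G B * hqint

end TreeProducts

section Newton

lemma mem_closure_of_newton {R : Type*} [Ring R] {g z : ℕ → R} (hg : g 0 = 1)
    (h : ∀ m : ℕ, ∑ a ∈ antidiagonal m with a.1 < m, g a.1 * z a.2 = m • g m) {m : ℕ}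
    (hm : m ≠ 0) : z m ∈ Subring.closure (Set.range g) := by
  have hmem : ∀ i, g i ∈ Subring.closure (Set.range g) := fun i => Subring.subset_closure ⟨i, rfl⟩
  induction m using Nat.strong_induction_on with
  | _ m ih =>
    have h0 : (0, m) ∈ {a ∈ antidiagonal m | a.1 < m} := by simp [Nat.pos_of_ne_zero hm]
    have hnewton := h m
    rw [← add_sum_erase _ _ h0, hg, one_mul] at hnewton
    rw [eq_sub_of_add_eq hnewton]
    refine sub_mem (nsmul_mem (hmem m) m) (sum_mem fun a ha => mul_mem (hmem _) (ih _ ?_ ?_))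
    all_goals
      simp only [mem_erase, mem_filter, HasAntidiagonal.mem_antidiagonal, ne_eq,
        Prod.ext_iff] at ha
      omega

namespace SetAlg

section General

variable {V : Type*} [LinearOrder V] {G : SimpleGraph V} [DecidableRel G.Adj]

/-- The function `S ↦ s(G|_S)` on the sets of size `m`. -/
noncomputable def dec (G : SimpleGraph V) [DecidableRel G.Adj] (m : ℕ) : SetAlg G :=
  grade (indS G) m

/-- The analogue in `SetAlg G` of the `m`-th power sum. -/
noncomputable def power (G : SimpleGraph V) [DecidableRel G.Adj] (m : ℕ) : SetAlg G :=
  grade (powerSums G) m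

lemma power_eq_smul_dec (m : ℕ) : power G m = ((-1) ^ (m + 1) * qint m) • dec G m := by
  ext1 S
  rw [smul_apply, power, dec, grade_apply, grade_apply]
  split_ifs with h
  · rw [powerSums, signedS, h]; ring
  · simp

lemma power_zero : power G 0 = 0 := by rw [power_eq_smul_dec, qint_zero, mul_zero, zero_smul]

lemma indep_zero : indep G 0 = 1 := by
  ext1 S
  rw [indep, grade_apply, one_apply]
  by_cases h : S = ∅ <;> simp [h]

end General

lemma smul_cancel {V : Type*} {G : SimpleGraph V} {r : ℤ[X]} (hr : r ≠ 0) {f g : SetAlg G}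
    (h : r • f = r • g) : f = g := by
  ext1 S
  exact mul_left_cancel₀ hr (congrFun h S)

end SetAlg

variable {n : ℕ} {G : SimpleGraph (Fin n)} [DecidableRel G.Adj]

lemma IsNUIG.newton (hG : IsNUIG G) (m : ℕ) :
    ∑ a ∈ antidiagonal m with a.1 < m, indep G a.1 * power G a.2 = m • indep G m := by
  rw [sum_filter_of_ne fun a ha hne => ?_]
  · unfold indep power
    rw [← Nat.cast_smul_eq_nsmul ℤ[X], sum_grade_mul_grade]
    ext1 S
    rw [smul_apply, grade_apply, grade_apply, hG.indepInd_mul_powerSums]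
    split_ifs with h
    · rw [h]
    · rw [mul_zero]
  · have h2 : a.2 ≠ 0 := fun h => hne (by rw [h, power_zero, mul_zero])
    rw [HasAntidiagonal.mem_antidiagonal] at ha
    omega

lemma IsNUIG.power_mem_closure (hG : IsNUIG G) {m : ℕ} (hm : m ≠ 0) :
    power G m ∈ Subring.closure (Set.range (indep G)) :=
  mem_closure_of_newton indep_zero hG.newton hm

lemma IsNUIG.power_commute (hG : IsNUIG G) {i j : ℕ} (hi : i ≠ 0) (hj : j ≠ 0) :
    Commute (power G i) (power G j) := by
  have := Subring.isMulCommutative_closure (s := Set.range (indep G)) (by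
    rintro _ ⟨a, rfl⟩ _ ⟨b, rfl⟩
    exact hG.indep_commute a b)
  exact setLike_mul_comm (hG.power_mem_closure hi) (hG.power_mem_closure hj)

lemma IsNUIG.dec_commute (hG : IsNUIG G) {i j : ℕ} (hi : i ≠ 0) (hj : j ≠ 0) :
    Commute (dec G i) (dec G j) := by
  have hne : ∀ {m : ℕ}, m ≠ 0 → ((-1) ^ (m + 1) * qint m : ℤ[X]) ≠ 0 := fun h =>
    mul_ne_zero (pow_ne_zero _ (neg_ne_zero.2 one_ne_zero)) (qint_ne_zero h)
  have h := hG.power_commute hi hj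
  rw [commute_iff_eq, power_eq_smul_dec, power_eq_smul_dec, smul_mul_smul_comm,
    smul_mul_smul_comm, mul_comm (_ * qint j)] at h
  exact smul_cancel (mul_ne_zero (hne hi) (hne hj)) h

end Newton

section Marked

attribute [local instance] LieRing.ofAssociativeRing

namespace SetAlg

section General

variable {V : Type*} [LinearOrder V] {G : SimpleGraph V}

/-- The restriction of `f` to the sets containing `v`. -/
noncomputable def marked (v : V) (f : SetAlg G) : SetAlg G := fun S => if v ∈ S then f S else 0

lemma marked_apply (v : V) (f : SetAlg G) (S : Finset V) :
    marked v f S = if v ∈ S then f S else 0 := rfl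

/-- The indicator function of `{v}`. -/
noncomputable def single (G : SimpleGraph V) (v : V) : SetAlg G :=
  fun S => if S = {v} then 1 else 0

lemma single_apply (v : V) (S : Finset V) : single G v S = if S = {v} then 1 else 0 := rfl

lemma single_insert {v : V} {A : Finset V} (hv : v ∉ A) :
    single G v (insert v A) = if A = ∅ then 1 else 0 := by
  refine if_congr ⟨fun h => ?_, fun h => by simp [h]⟩ rfl rfl
  rw [← erase_insert hv, h, erase_singleton]

lemma single_of_notMem {v : V} {A : Finset V} (hv : v ∉ A) : single G v A = 0 :=
  if_neg fun h : A = {v} => hv (h ▸ mem_singleton_self v)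

variable [DecidableRel G.Adj]

lemma marked_mul (v : V) (f g : SetAlg G) :
    marked v (f * g) = marked v f * g + f * marked v g := by
  ext1 S
  simp only [marked_apply, add_apply, mul_apply, ← splitSum_add]
  by_cases hv : v ∈ S
  · rw [if_pos hv]
    refine splitSum_congr fun A B hAB hS => ?_
    rw [← hS, mem_union] at hv
    by_cases hA : v ∈ A
    · simp [hA, disjoint_left.1 hAB hA]
    · simp [hA, hv.resolve_left hA]
  · rw [if_neg hv, eq_comm]
    refine splitSum_eq_zero fun A B _ hS => ?_
    rw [← hS, mem_union, not_or] at hv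
    simp [hv]

lemma marked_dec_one (v : V) : marked v (dec G 1) = single G v := by
  ext1 S
  rw [marked_apply, dec, grade_apply, single_apply]
  by_cases h : S = {v}
  · simp [h]
  · have : v ∈ S → #S ≠ 1 := fun hv h1 => h <| by
      obtain ⟨w, rfl⟩ := card_eq_one.1 h1
      rw [mem_singleton.1 hv]
    split_ifs <;> tauto

lemma single_mul_of_notMem {v : V} {S : Finset V} (hv : v ∉ S) (f : SetAlg G) :
    (single G v * f) S = 0 :=
  splitSum_eq_zero fun A B _ hS => by
    rw [single_of_notMem fun hA => hv (hS ▸ mem_union_left B hA), mul_zero, zero_mul]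

lemma mul_single_of_notMem {v : V} {S : Finset V} (hv : v ∉ S) (f : SetAlg G) :
    (f * single G v) S = 0 :=
  splitSum_eq_zero fun A B _ hS => by
    rw [single_of_notMem fun hB => hv (hS ▸ mem_union_right A hB), mul_zero]

lemma single_mul_insert {v : V} {S : Finset V} (hv : ∀ w ∈ S, v < w) (f : SetAlg G) :
    (single G v * f) (insert v S) = X ^ degIn G v S * f S := by
  have hvS : v ∉ S := fun h => (hv v h).false
  rw [mul_apply, splitSum_insert hvS]
  trans splitSum S fun A B => if A = ∅ then X ^ degIn G v B * f B else 0
  · refine splitSum_congr fun A B _ hS => ?_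
    obtain ⟨hA, -⟩ : v ∉ A ∧ v ∉ B := by rw [← not_or, ← mem_union, hS]; exact hvS
    rw [single_insert hA, single_of_notMem hA, mul_zero, zero_mul, add_zero]
    split_ifs with h
    · have hasc := ascBetween_insert_left_of_gt (G := G) (notMem_empty v)
        fun b hb => hv b (hS ▸ mem_union_right A hb)
      rw [h, hasc, ascBetween_empty_left, zero_add, mul_one]
    · ring
  · rw [splitSum_single_left fun A B hA => if_neg hA, if_pos rfl]

lemma mul_single_insert {v : V} {S : Finset V} (hv : ∀ w ∈ S, v < w) (f : SetAlg G) :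
    (f * single G v) (insert v S) = f S := by
  have hvS : v ∉ S := fun h => (hv v h).false
  rw [mul_apply, splitSum_insert hvS, ← splitSum_swap]
  trans splitSum S fun A B => if A = ∅ then f B else 0
  · refine splitSum_congr fun A B _ hS => ?_
    obtain ⟨hA, -⟩ : v ∉ A ∧ v ∉ B := by rw [← not_or, ← mem_union, hS]; exact hvS
    rw [single_insert hA, single_of_notMem hA, mul_zero, zero_add]
    split_ifs with h
    · have hasc := ascBetween_insert_right_of_gt (G := G)
        (fun b hb => hv b (hS ▸ mem_union_right A hb)) (notMem_empty v)
      rw [h, hasc, ascBetween_empty_right, pow_zero, one_mul, mul_one]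
    · ring
  · exact (splitSum_single_left fun A B hA => if_neg hA).trans (if_pos rfl)

lemma lie_marked_of_commute {v : V} {f g : SetAlg G} (h : Commute f g) :
    ⁅marked v f, g⁆ = ⁅marked v g, f⁆ := by
  have hm := congrArg (marked v) h.eq
  rw [marked_mul, marked_mul] at hm
  rw [Ring.lie_def, Ring.lie_def, sub_eq_sub_iff_add_eq_add, hm]

end General

end SetAlg

variable {n : ℕ} {G : SimpleGraph (Fin n)} [DecidableRel G.Adj] {v : Fin n}

lemma IsNUIG.lie_single_dec (hG : IsNUIG G) (hv : ∀ w, v ≤ w) {m : ℕ} (hm : m ≠ 0) :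
    ⁅single G v, dec G m⁆ = (X - 1 : ℤ[X]) • marked v (dec G (m + 1)) := by
  ext1 S
  rw [Ring.lie_def, sub_apply, smul_apply, marked_apply]
  by_cases hvS : v ∈ S
  · obtain ⟨T, hvT, rfl⟩ : ∃ T, v ∉ T ∧ insert v T = S :=
      ⟨S.erase v, notMem_erase v S, insert_erase hvS⟩
    have hlt : ∀ w ∈ T, v < w := fun w hw => (hv w).lt_of_ne fun h => hvT (h ▸ hw)
    simp only [single_mul_insert hlt, mul_single_insert hlt, if_pos hvS, dec, grade_apply,
      card_insert_of_notMem hvT, add_left_inj]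
    split_ifs with hT
    · rw [hG.indS_insert_of_gt (card_ne_zero.1 (hT ▸ hm)) hlt]
      linear_combination -indS G T * X_sub_one_mul_qint (degIn G v T)
    · ring
  · rw [single_mul_of_notMem hvS, mul_single_of_notMem hvS, if_neg hvS, sub_zero, mul_zero]

lemma IsNUIG.lie_marked_dec (hG : IsNUIG G) (hv : ∀ w, v ≤ w) {m j : ℕ} (hm : m ≠ 0)
    (hj : j ≠ 0) :
    ⁅marked v (dec G m), dec G j⁆ = (X - 1 : ℤ[X]) • marked v (dec G (m + j)) := by
  induction m generalizing j with
  | zero => exact absurd rfl hm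
  | succ m ih =>
    rcases eq_or_ne m 0 with rfl | hm'
    · rw [zero_add, marked_dec_one, hG.lie_single_dec hv hj, add_comm]
    · apply smul_cancel X_sub_one_ne_zero
      calc (X - 1 : ℤ[X]) • ⁅marked v (dec G (m + 1)), dec G j⁆
        _ = ⁅⁅single G v, dec G m⁆, dec G j⁆ := by rw [hG.lie_single_dec hv hm', smul_lie]
        _ = ⁅⁅single G v, dec G j⁆, dec G m⁆ := by
          rw [lie_lie, (hG.dec_commute hm' hj).lie_eq, lie_zero, zero_sub, lie_skew]
        _ = (X - 1 : ℤ[X]) • ⁅marked v (dec G (j + 1)), dec G m⁆ := by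
          rw [hG.lie_single_dec hv hj, smul_lie]
        _ = (X - 1 : ℤ[X]) • ⁅marked v (dec G m), dec G (j + 1)⁆ := by
          rw [lie_marked_of_commute (hG.dec_commute hm' j.succ_ne_zero)]
        _ = (X - 1 : ℤ[X]) • (X - 1 : ℤ[X]) • marked v (dec G (m + 1 + j)) := by
          rw [ih hm' j.succ_ne_zero, add_right_comm, add_assoc]

end Marked

section OrderedSplittings

variable {V : Type*} [LinearOrder V] {G : SimpleGraph V} [DecidableRel G.Adj] {N : ℕ}

/-- The number of edges of `G` between two of the sets `P 0, …, P (N - 1)` whose smaller end lies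
in the earlier set. -/
def ascParts (G : SimpleGraph V) [DecidableRel G.Adj] (P : Fin N → Finset V) : ℕ :=
  ∑ c, ∑ d ∈ Ioi c, ascBetween G (P c) (P d)

lemma sum_ascBetween {A B : Finset V} {P : Fin N → Finset V} (hP : ∑ c, (P c).val = B.val) :
    ∑ c, ascBetween G A (P c) = ascBetween G A B := by
  have hsum : ∀ T : Finset V, ascBetween G A T =
      (T.val.map fun b => ∑ a ∈ A, if a < b ∧ G.Adj a b then 1 else 0).sum := fun T => sum_comm
  simp only [hsum, ← hP]
  simp only [← Multiset.coe_mapAddMonoidHom, ← Multiset.coe_sumAddMonoidHom, map_sum]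

lemma ascParts_cons {A B : Finset V} {P : Fin N → Finset V} (hP : ∑ c, (P c).val = B.val) :
    ascParts G (Fin.cons A P : Fin (N + 1) → Finset V) = ascBetween G A B + ascParts G P := by
  simp [ascParts, Fin.sum_univ_succ, Fin.sum_Ioi_succ, sum_ascBetween hP]

variable [Fintype V]

namespace SetAlg

lemma prod_ofFn_apply (f : Fin N → SetAlg G) (S : Finset V) :
    (List.ofFn f).prod S = ∑ P : Fin N → Finset V with ∑ c, (P c).val = S.val,
      X ^ ascParts G P * ∏ c, f c (P c) := by
  induction N generalizing S with
  | zero =>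
    rw [List.ofFn_zero, List.prod_nil, one_apply]
    by_cases hS : S = ∅ <;> simp [ascParts, hS, eq_comm]
  | succ N ih =>
    have hval : ∀ (A : Finset V) (m : Multiset V),
        A.val + m = S.val ↔ A ⊆ S ∧ m = (S \ A).val := fun A m => by
      refine ⟨fun h => ⟨val_le_iff.1 (h ▸ Multiset.le_add_right _ _), ?_⟩, fun ⟨hA, hm⟩ => ?_⟩
      · rw [sdiff_val, ← h, add_tsub_cancel_left]
      · rw [hm, sdiff_val, add_tsub_cancel_of_le (val_le_iff.2 hA)]
    have hpow : S.powerset = univ.filter (· ⊆ S) := by ext; simp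
    rw [List.ofFn_succ, List.prod_cons, mul_apply, splitSum, sum_filter,
      ← (Fin.consEquiv fun _ => Finset V).sum_comp, Fintype.sum_prod_type, hpow, sum_filter]
    refine sum_congr rfl fun A _ => ?_
    simp only [Fin.consEquiv_apply, Fin.sum_univ_succ, Fin.prod_univ_succ, Fin.cons_zero,
      Fin.cons_succ, hval]
    split_ifs with hA
    swap
    · simp [hA]
    simp only [hA, true_and, ih, mul_sum, ← sum_filter]
    refine sum_congr rfl fun P hP => ?_
    have hasc : ascParts G (Fin.consEquiv (fun _ => Finset V) (A, P)) = _ :=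
      ascParts_cons (mem_filter.1 hP).2
    rw [hasc, pow_add]
    ring

end SetAlg

lemma sum_val_eq_univ_iff {P : Fin N → Finset V} :
    ∑ c, (P c).val = (univ : Finset V).val ↔ ∀ v, ∃! c, v ∈ P c := by
  have hcount : ∀ v, (∑ c, (P c).val).count v = #{c | v ∈ P c} := fun v => by
    simp only [Multiset.count_sum', Multiset.count_eq_of_nodup (P _).nodup, mem_val, card_filter]
  simp only [Multiset.ext, hcount, Multiset.count_univ, card_eq_one_iff_existsUnique]
  simp

lemma sum_splittings_univ {M : Type*} [AddCommMonoid M] (F : (Fin N → Finset V) → M) :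
    ∑ P : Fin N → Finset V with ∑ c, (P c).val = (univ : Finset V).val, F P =
      ∑ κ : V → Fin N, F fun c => {v | κ v = c} := by
  refine (sum_bij (fun (κ : V → Fin N) _ c => ({v | κ v = c} : Finset V)) (fun κ _ => ?_)
    (fun κ _ κ' _ h => ?_) (fun P hP => ?_) fun _ _ => rfl).symm
  · simp only [mem_filter_univ, sum_val_eq_univ_iff, existsUnique_eq', implies_true]
  · ext1 v
    simpa using Finset.ext_iff.1 (congrFun h (κ' v)) v
  · choose κ hκ huniq using sum_val_eq_univ_iff.1 (mem_filter.1 hP).2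
    refine ⟨κ, mem_univ κ, ?_⟩
    ext c v
    rw [mem_filter_univ]
    exact ⟨fun h => h ▸ hκ v, fun h => (huniq v c h).symm⟩

end OrderedSplittings

section Colourings

variable {n N : ℕ} {G : SimpleGraph (Fin n)} [DecidableRel G.Adj]

lemma ascNum_eq_ascParts (κ : Fin n → Fin N) :
    ascNum G κ = ascParts G fun c => {v | κ v = c} := by
  have hfib : ∀ F : Fin n → Fin N → ℕ, ∑ a, F a (κ a) = ∑ c, ∑ a with κ a = c, F a c := fun F => by
    rw [← sum_fiberwise univ κ]
    exact sum_congr rfl fun c _ => sum_congr rfl fun a ha => by rw [(mem_filter.1 ha).2]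
  calc ascNum G κ
    _ = ∑ a, ∑ b, if κ a < κ b then if a < b ∧ G.Adj a b then 1 else 0 else 0 := by
      rw [ascNum, ← sum_product', Nat.card_eq_fintype_card, Fintype.card_subtype, card_filter]
      exact sum_congr rfl fun p _ => by rw [← ite_and]; exact if_congr (by tauto) rfl rfl
    _ = ∑ c, ∑ a with κ a = c, ∑ d, ∑ b with κ b = d,
          if c < d then if a < b ∧ G.Adj a b then 1 else 0 else 0 := by
      rw [hfib fun a c => ∑ b, if c < κ b then if a < b ∧ G.Adj a b then 1 else 0 else 0]
      exact sum_congr rfl fun c _ => sum_congr rfl fun a _ =>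
        hfib fun b d => if c < d then if a < b ∧ G.Adj a b then 1 else 0 else 0
    _ = ascParts G fun c => {v | κ v = c} := by
      refine sum_congr rfl fun c _ => ?_
      rw [sum_comm, ← filter_lt_eq_Ioi, sum_filter]
      refine sum_congr rfl fun d _ => ?_
      split_ifs <;> simp [ascBetween, *]

lemma cqf_eq_sum :
    cqf G N = ∑ κ : Fin n → Fin N, MvPolynomial.C (X ^ ascNum G κ *
      ∏ c, indepInd G {v | κ v = c}) * ∏ i, MvPolynomial.X (κ i) := by
  classical
  have hproper : ∀ κ : Fin n → Fin N, ∏ c, indepInd G {v | κ v = c} =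
      if ∀ i j, G.Adj i j → κ i ≠ κ j then 1 else 0 := fun κ => by
    simp only [indepInd, prod_ite_zero, mem_univ, true_imp_iff, prod_const_one]
    refine if_congr ⟨fun h i j hij heq => ?_, fun h c i hi j hj _ hij => ?_⟩ rfl rfl
    · exact h (κ j) (by simpa using heq) (by simp) hij.ne hij
    · simp only [coe_filter_univ, Set.mem_ofPred_eq] at hi hj
      exact h i j hij (hi.trans hj.symm)
  trans ∑ κ : Fin n → Fin N with ∀ i j, G.Adj i j → κ i ≠ κ j,
      MvPolynomial.C (X ^ ascNum G κ) * ∏ i, MvPolynomial.X (κ i)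
  · rw [cqf, ← finsum_mem_coe_finset]
    simp
  · rw [sum_filter]
    refine sum_congr rfl fun κ _ => ?_
    rw [hproper]
    split_ifs <;> simp

lemma coeff_cqf (α : Fin N →₀ ℕ) :
    MvPolynomial.coeff α (cqf G N) = (List.ofFn fun c => indep G (α c)).prod univ := by
  rw [cqf_eq_sum, prod_ofFn_apply, sum_splittings_univ, MvPolynomial.coeff_sum]
  refine sum_congr rfl fun κ _ => ?_
  simp only [MvPolynomial.coeff_C_mul, coeff_prod_X, ascNum_eq_ascParts, indep, grade_apply,
    prod_ite_zero, mem_univ, true_imp_iff, mul_ite, mul_zero, mul_one]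

end Colourings

section CoefficientExtraction

variable {n : ℕ} {G : SimpleGraph (Fin n)} [DecidableRel G.Adj]

/-- The analogue of the `m`-th elementary symmetric function in `SetAlg G`, paired with the genuine
elementary symmetric polynomial in `n` variables. -/
noncomputable def indepPair (G : SimpleGraph (Fin n)) [DecidableRel G.Adj] (m : ℕ) :
    SetAlg G × MvPolynomial (Fin n) ℤ[X] :=
  (indep G m, MvPolynomial.esymm (Fin n) ℤ[X] m)

/-- The analogue of the `m`-th power sum in `SetAlg G`, paired with the genuine power sum in `n`
variables, both signed as in Newton's identities. -/
noncomputable def powerPair (G : SimpleGraph (Fin n)) [DecidableRel G.Adj] (m : ℕ) :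
    SetAlg G × MvPolynomial (Fin n) ℤ[X] :=
  (power G m, (-1) ^ (m + 1) * MvPolynomial.psum (Fin n) ℤ[X] m)

/-- The pair `powerPair G m` without its signs. -/
noncomputable def psumPair (G : SimpleGraph (Fin n)) [DecidableRel G.Adj] (m : ℕ) :
    SetAlg G × MvPolynomial (Fin n) ℤ[X] :=
  (qint m • dec G m, MvPolynomial.psum (Fin n) ℤ[X] m)

lemma psumPair_eq_smul_powerPair (m : ℕ) :
    psumPair G m = (-1 : ℤ) ^ (m + 1) • powerPair G m := by
  have hsign : ∀ {R : Type} [CommRing R], (-1 : R) ^ (m + 1) * (-1) ^ (m + 1) = 1 := by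
    simp [← mul_pow]
  rw [psumPair, powerPair, power_eq_smul_dec, Prod.smul_mk, ← Int.cast_smul_eq_zsmul ℤ[X],
    smul_smul, zsmul_eq_mul]
  push_cast
  rw [← mul_assoc, ← mul_assoc, hsign, hsign, one_mul, one_mul]

lemma IsNUIG.powerPair_mem_closure (hG : IsNUIG G) {m : ℕ} (hm : m ≠ 0) :
    powerPair G m ∈ Subring.closure (Set.range (indepPair G)) := by
  have hsign : ∀ {R : Type} [CommRing R] (i j : ℕ),
      (-1 : R) ^ (i + j + 1) * (-1) ^ i = (-1) ^ (j + 1) := fun i j => by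
    rw [← pow_add, show i + j + 1 + i = j + 1 + 2 * i by ring, pow_add,
      (even_two_mul i).neg_one_pow, mul_one]
  refine mem_closure_of_newton (Prod.ext indep_zero (MvPolynomial.esymm_zero (Fin n) ℤ[X]))
    (fun m => Prod.ext ?_ ?_) hm
  · rw [Prod.fst_sum]
    exact hG.newton m
  · rw [Prod.snd_sum, Prod.smul_snd, nsmul_eq_mul]
    refine .trans ?_ (MvPolynomial.mul_esymm_eq_sum (Fin n) ℤ[X] m).symm
    rw [mul_sum]
    refine sum_congr rfl fun a ha => ?_
    rw [mem_filter, HasAntidiagonal.mem_antidiagonal] at ha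
    rw [indepPair, powerPair, Prod.snd_mul, ← ha.1, ← hsign a.1 a.2]
    ring

lemma IsNUIG.psumPair_mem_closure (hG : IsNUIG G) {m : ℕ} (hm : m ≠ 0) :
    psumPair G m ∈ Subring.closure (Set.range (indepPair G)) := by
  rw [psumPair_eq_smul_powerPair]
  exact zsmul_mem (hG.powerPair_mem_closure hm) _

/-- `c` is the family of coefficients of the elementary symmetric expansion of `X_G(x;q)`. -/
def IsEsymmExpansion (G : SimpleGraph (Fin n)) (c : n.Partition → ℤ[X]) : Prop :=
  ∀ N : ℕ, cqf G N = ∑ μ : n.Partition,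
    MvPolynomial.C (c μ) * MvPolynomial.esymmPart (Fin N) ℤ[X] μ

variable {c : n.Partition → ℤ[X]}

lemma IsEsymmExpansion.prod_indep_apply_univ (hc : IsEsymmExpansion G c) {N : ℕ}
    (α : Fin N →₀ ℕ) :
    (List.ofFn fun i => indep G (α i)).prod univ = ∑ μ, c μ *
      MvPolynomial.coeff (partExp μ) (∏ i, MvPolynomial.esymm (Fin n) ℤ[X] (α i)) := by
  rw [← coeff_cqf, hc, MvPolynomial.coeff_sum]
  refine sum_congr rfl fun μ _ => ?_
  rw [MvPolynomial.coeff_C_mul, MvPolynomial.esymmPart,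
    ← prod_partExp (MvPolynomial.esymm_zero (Fin N) ℤ[X]), coeff_prod_esymm_comm]

lemma IsEsymmExpansion.apply_univ_of_mem_closure (hc : IsEsymmExpansion G c)
    {x : SetAlg G × MvPolynomial (Fin n) ℤ[X]}
    (hx : x ∈ Subring.closure (Set.range (indepPair G))) :
    x.1 univ = ∑ μ, c μ * MvPolynomial.coeff (partExp μ) x.2 := by
  rw [Subring.mem_closure_iff] at hx
  induction hx using AddSubgroup.closure_induction with
  | mem x hx =>
    obtain ⟨l, hl, rfl⟩ := Submonoid.exists_list_of_mem_closure hx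
    obtain ⟨w, rfl⟩ : l ∈ Set.range (List.map (indepPair G)) := by
      rwa [Set.range_list_map]
    set α : Fin w.length →₀ ℕ := Finsupp.equivFunOnFinite.symm fun i => w.get i
    have hw : w.map (indepPair G) = List.ofFn fun i => indepPair G (α i) := by
      conv_lhs => rw [← List.ofFn_get w, List.map_ofFn]
      rfl
    have hfst : (w.map (indepPair G)).prod.1 = (List.ofFn fun i => indep G (α i)).prod := by
      rw [hw, ← RingHom.coe_fst, map_list_prod, List.map_ofFn]
      rfl
    have hsnd : (w.map (indepPair G)).prod.2 = ∏ i, MvPolynomial.esymm (Fin n) ℤ[X] (α i) := by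
      rw [hw, ← RingHom.coe_snd, map_list_prod, List.map_ofFn, List.prod_ofFn]
      rfl
    rw [hfst, hsnd, hc.prod_indep_apply_univ]
  | zero => simp
  | add x y _ _ hx hy => simp [hx, hy, mul_add, sum_add_distrib]
  | neg x _ hx => simp [hx]

lemma dec_univ : dec G n univ = sG G := by
  rw [dec, grade_apply, card_fin, if_pos rfl, indS, sG]
  refine prod_congr ?_ fun i _ => ?_
  · ext i
    simp only [mem_filter_univ, mem_univ, true_and]
    exact ⟨fun ⟨j, hj⟩ => Nat.ne_zero_of_lt (Fin.lt_def.1 hj),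
      fun h => ⟨⟨0, i.pos⟩, Fin.lt_def.2 (Nat.pos_of_ne_zero h)⟩⟩
  · rw [degIn, filter_filter, bG, Nat.card_eq_fintype_card, Fintype.card_subtype]

lemma IsEsymmExpansion.coeff_two_part (hc : IsEsymmExpansion G c) (hG : IsNUIG G) {a b : ℕ}
    (ha : a ≠ 0) (hb : b ≠ 0) (hab : a ≠ b) (hn : a + b = n) {μ : n.Partition}
    (hμ : μ.parts = {a, b}) :
    c μ = qint a * qint b * (dec G a * dec G b) univ - qint n * dec G n univ := by
  subst hn
  have hmem := sub_mem (mul_mem (hG.psumPair_mem_closure ha) (hG.psumPair_mem_closure hb))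
    (hG.psumPair_mem_closure (m := a + b) (by omega))
  have hexp := hc.apply_univ_of_mem_closure hmem
  simp only [psumPair, Prod.fst_sub, Prod.snd_sub, Prod.fst_mul, Prod.snd_mul,
    coeff_psum_mul_psum_sub ha hb hab, support_map_partExp, smul_mul_smul_comm, sub_apply,
    smul_apply, mul_ite, mul_one, mul_zero] at hexp
  rw [hexp, sum_eq_single μ (fun ν _ hν => if_neg fun h => hν ?_) (by simp), if_pos hμ]
  exact Nat.Partition.ext (h.trans hμ.symm)

end CoefficientExtraction

section WordInversions

variable {V : Type*} [LinearOrder V] {G : SimpleGraph V} [DecidableRel G.Adj]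

/-- The number of inversions of a word which are edges of `G`, by recursion on the word. -/
def wordInv (G : SimpleGraph V) [DecidableRel G.Adj] : List V → ℕ
  | [] => 0
  | x :: l => l.countP (fun y => y < x ∧ G.Adj y x) + wordInv G l

lemma countP_eq_card_filter {p : V → Prop} [DecidablePred p] {l : List V} (hl : l.Nodup) :
    l.countP (fun y => p y) = #{y ∈ l.toFinset | p y} := by
  rw [List.countP_eq_length_filter, ← List.toFinset_card_of_nodup (hl.filter _),
    List.toFinset_filter]
  simp only [decide_eq_true_eq]

lemma wordInv_append {l₁ l₂ : List V} (h₁ : l₁.Nodup) (h₂ : l₂.Nodup) :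
    wordInv G (l₁ ++ l₂) =
      wordInv G l₁ + wordInv G l₂ + ascBetween G l₂.toFinset l₁.toFinset := by
  induction l₁ with
  | nil => simp [wordInv]
  | cons x l₁ ih =>
    obtain ⟨hx, h₁⟩ := List.nodup_cons.1 h₁
    have hcount : ascBetween G l₂.toFinset {x} = l₂.countP fun y => y < x ∧ G.Adj y x := by
      simp only [countP_eq_card_filter h₂, ascBetween, sum_singleton, card_filter]
    rw [List.cons_append, wordInv, wordInv, ih h₁, List.countP_append, List.toFinset_cons,
      insert_eq, ascBetween_union_right (by simpa using hx), hcount]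
    ring

lemma wordInv_insert_of_lt {w : V} {l₁ l₂ : List V} (h₁ : ∀ x ∈ l₁, x < w)
    (h₂ : ∀ x ∈ l₂, x < w) :
    wordInv G (l₁ ++ w :: l₂) = wordInv G (l₁ ++ l₂) + l₂.countP fun y => G.Adj y w := by
  induction l₁ with
  | nil =>
    rw [List.nil_append, List.nil_append, wordInv, add_comm]
    congr 1
    exact List.countP_congr fun y hy => by simp [h₂ y hy]
  | cons x l₁ ih =>
    have hxw : ¬ w < x := (h₁ x List.mem_cons_self).not_gt
    rw [List.cons_append, List.cons_append, wordInv, wordInv,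
      ih fun y hy => h₁ y (List.mem_cons_of_mem x hy)]
    simp [hxw, add_assoc]

lemma invG_eq_wordInv {n : ℕ} {G : SimpleGraph (Fin n)} [DecidableRel G.Adj]
    (l : List (Fin n)) : invG G l = wordInv G l := by
  have h : ∀ l : List (Fin n), invG G l = ∑ i : Fin l.length, ∑ j : Fin l.length,
      if i < j ∧ l.get j < l.get i ∧ G.Adj (l.get j) (l.get i) then 1 else 0 := by
    intro l
    rw [invG, ← sum_product', Nat.card_eq_fintype_card, Fintype.card_subtype, card_filter]
    rfl
  rw [h]
  induction l with
  | nil => rfl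
  | cons x l ih =>
    have hcount : l.countP (fun y => y < x ∧ G.Adj y x) =
        ∑ j : Fin l.length, if l[(j : ℕ)] < x ∧ G.Adj l[(j : ℕ)] x then 1 else 0 := by
      rw [Fin.sum_univ_fun_getElem l fun y => if y < x ∧ G.Adj y x then 1 else 0]
      simp [List.countP_eq_length_filter, List.sum_map_ite]
    rw [wordInv, ← ih, hcount]
    change ∑ i : Fin (l.length + 1), ∑ j : Fin (l.length + 1), _ = _
    rw [Fin.sum_univ_succ, Fin.sum_univ_succ]
    congr 1
    · simp
    · refine sum_congr rfl fun i _ => ?_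
      rw [Fin.sum_univ_succ]
      simp

end WordInversions

section Slots

variable {V : Type*} (d : V → Prop) [DecidablePred d]

/-- The positions of a word which come after some letter satisfying `d` and at which the next
letter, if any, satisfies `d`. -/
def slots (l : List V) : Finset ℕ :=
  {i ∈ range (l.length + 1) | (∃ u ∈ l.take i, d u) ∧ ∀ y ∈ (l.drop i).head?, d y}

variable {d} in
lemma mem_slots {l : List V} {i : ℕ} :
    i ∈ slots d l ↔ i ≤ l.length ∧ (∃ u ∈ l.take i, d u) ∧ ∀ y ∈ (l.drop i).head?, d y := by
  rw [slots, mem_filter, mem_range_succ_iff]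

lemma sum_head_drop (l : List V) :
    ∑ i ∈ range (l.length + 1) with ∀ y ∈ (l.drop i).head?, d y,
      (X : ℤ[X]) ^ (l.drop i).countP (fun y => d y) = qint (l.countP (fun y => d y) + 1) := by
  rw [sum_filter]
  induction l with
  | nil => simp [qint_one]
  | cons x l ih =>
    rw [List.length_cons, sum_range_succ']
    simp only [List.drop_succ_cons]
    rw [ih]
    by_cases hx : d x
    · simp [hx, qint_succ]
    · simp [hx]

lemma sum_slots (l : List V) :
    ∑ i ∈ slots d l, (X : ℤ[X]) ^ (l.drop i).countP (fun y => d y) =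
      qint (l.countP fun y => d y) := by
  rw [slots, sum_filter]
  induction l with
  | nil => simp [qint_zero]
  | cons x l ih =>
    rw [List.length_cons, sum_range_succ']
    by_cases hx : d x
    · simpa [hx, sum_filter] using sum_head_drop d l
    · simpa [hx] using ih

end Slots

section ReadingWords

section Reach

variable {V : Type*} {G : SimpleGraph V} {P Q : Set V}

/-- Every letter of the word is adjacent to an earlier letter or to an element of `P`. -/
def Reach (G : SimpleGraph V) : Set V → List V → Prop
  | _, [] => True
  | P, x :: l => (∃ u ∈ P, G.Adj u x) ∧ Reach G (insert x P) l

lemma reach_iff {l : List V} :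
    Reach G P l ↔ ∀ t (ht : t < l.length), ∃ u, (u ∈ P ∨ u ∈ l.take t) ∧ G.Adj u l[t] := by
  induction l generalizing P with
  | nil => simp [Reach]
  | cons x l ih =>
    rw [Reach, ih]
    constructor
    · rintro ⟨⟨u, hu, hux⟩, h⟩ (_ | t) ht
      · exact ⟨u, Or.inl hu, hux⟩
      · obtain ⟨v, hv, hvt⟩ := h t (by simpa using ht)
        refine ⟨v, ?_, hvt⟩
        rw [List.take_succ_cons, List.mem_cons]
        rw [Set.mem_insert_iff] at hv
        tauto
    · intro h
      obtain ⟨u, hu, hux⟩ := h 0 (by simp)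
      refine ⟨⟨u, by simpa using hu, hux⟩, fun t ht => ?_⟩
      obtain ⟨v, hv, hvt⟩ := h (t + 1) (by simpa using ht)
      refine ⟨v, ?_, hvt⟩
      rw [List.take_succ_cons, List.mem_cons] at hv
      rw [Set.mem_insert_iff]
      tauto

lemma Reach.mono {l : List V} (h : Reach G P l) (hPQ : P ⊆ Q) : Reach G Q l := by
  rw [reach_iff] at h ⊢
  intro t ht
  obtain ⟨u, hu, hut⟩ := h t ht
  exact ⟨u, hu.imp_left fun h => hPQ h, hut⟩

lemma reach_append {l₁ l₂ : List V} :
    Reach G P (l₁ ++ l₂) ↔ Reach G P l₁ ∧ Reach G (P ∪ {x | x ∈ l₁}) l₂ := by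
  induction l₁ generalizing P with
  | nil => simp [Reach]
  | cons x l₁ ih =>
    have h : insert x P ∪ {y | y ∈ l₁} = P ∪ {y | y ∈ x :: l₁} := by
      ext y
      simp only [Set.mem_union, Set.mem_insert_iff, Set.mem_ofPred_eq, List.mem_cons]
      tauto
    rw [List.cons_append, Reach, Reach, ih, h, and_assoc]

/-- A letter adjacent to `w` is adjacent to `u` too, both being among the neighbours of `w`. -/
lemma NbrClique.reach_of_insert {u w : V} {S : Finset V} {l : List V} (hS : NbrClique G w S)
    (huS : u ∈ S) (hlS : ∀ x ∈ l, x ∈ S) (hu : u ∈ P) (huw : G.Adj u w) (hul : u ∉ l)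
    (h : Reach G (insert w P) l) : Reach G P l := by
  induction l generalizing P with
  | nil => trivial
  | cons x l ih =>
    obtain ⟨⟨v, hv, hvx⟩, h⟩ := h
    rw [List.mem_cons, not_or] at hul
    rw [List.forall_mem_cons] at hlS
    refine ⟨?_, ih hlS.2 (Set.mem_insert_of_mem x hu) hul.2 (by rwa [Set.insert_comm])⟩
    rcases hv with rfl | hv
    · exact ⟨u, hu, hS ⟨huS, huw⟩ ⟨hlS.1, hvx.symm⟩ hul.1⟩
    · exact ⟨v, hv, hvx⟩

end Reach

/-- The words which are the reading lists of the decreasing subtrees of a natural unit interval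
graph: without repetition, starting with their smallest letter, in which every other letter is
adjacent to an earlier one and every descent is an edge. -/
def IsReadingWord {V : Type*} [LT V] (G : SimpleGraph V) : List V → Prop
  | [] => False
  | h :: l => (h :: l).Nodup ∧ (∀ x ∈ l, h < x) ∧ Reach G {h} l ∧
      List.IsChain (fun a b => b < a → G.Adj a b) (h :: l)

lemma IsReadingWord.nodup {V : Type*} [LT V] {G : SimpleGraph V} {l : List V}
    (h : IsReadingWord G l) : l.Nodup := by
  cases l with
  | nil => exact List.nodup_nil
  | cons x l => exact h.1

lemma IsReadingWord.ne_nil {V : Type*} [LT V] {G : SimpleGraph V} {l : List V}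
    (h : IsReadingWord G l) : l ≠ [] := by
  rintro rfl
  exact h

lemma isReadingWord_iff {V : Type*} [PartialOrder V] {G : SimpleGraph V} {l : List V} :
    IsReadingWord G l ↔ l.Nodup ∧ ∃ h0 : 0 < l.length,
      (∀ x ∈ l, l[0] ≤ x) ∧ (∀ t (ht : t < l.length), 0 < t → ∃ u ∈ l.take t, G.Adj u l[t]) ∧
        ∀ t (ht : t + 1 < l.length), l[t + 1] < l[t] → G.Adj l[t] l[t + 1] := by
  cases l with
  | nil => simp [IsReadingWord]
  | cons h l =>
    have hr : Reach G {h} l ↔ ∀ t (ht : t < (h :: l).length), 0 < t →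
        ∃ u ∈ (h :: l).take t, G.Adj u (h :: l)[t] := by
      simp only [reach_iff, Set.mem_singleton_iff]
      refine ⟨fun H t ht h0 => ?_, fun H t ht => ?_⟩
      · obtain ⟨t, rfl⟩ := Nat.exists_eq_succ_of_ne_zero h0.ne'
        simpa only [List.take_succ_cons, List.mem_cons, List.getElem_cons_succ]
          using H t (by simpa using ht)
      · obtain ⟨u, hu, hut⟩ := H (t + 1) (by simpa using ht) t.succ_pos
        exact ⟨u, List.mem_cons.1 hu, hut⟩
    rw [IsReadingWord, List.isChain_iff_getElem, hr]
    refine and_congr_right fun hnd => ?_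
    rw [exists_prop_of_true (by simp)]
    refine and_congr_left fun _ => ?_
    simp only [List.getElem_cons_zero, List.forall_mem_cons, le_refl, true_and]
    refine forall₂_congr fun x hx => ⟨le_of_lt, fun hle => hle.lt_of_ne ?_⟩
    rintro rfl
    exact (List.nodup_cons.1 hnd).1 hx

section Insertion

variable {n : ℕ} {G : SimpleGraph (Fin n)} {w : Fin n} {l₁ l₂ : List (Fin n)}

lemma IsNUIG.isChain_insert_iff (hG : IsNUIG G) (h₁ : ∀ x ∈ l₁, x < w) (h₂ : ∀ x ∈ l₂, x < w) :
    (l₁ ++ w :: l₂).IsChain (fun a b => b < a → G.Adj a b) ↔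
      (l₁ ++ l₂).IsChain (fun a b => b < a → G.Adj a b) ∧ ∀ y ∈ l₂.head?, G.Adj y w := by
  rw [List.isChain_append, List.isChain_append, List.isChain_cons]
  constructor
  · rintro ⟨hc₁, ⟨hw, hc₂⟩, -⟩
    have hhead : ∀ y ∈ l₂.head?, G.Adj y w := fun y hy =>
      (hw y hy (h₂ y (List.mem_of_mem_head? hy))).symm
    refine ⟨⟨hc₁, hc₂, fun x hx y hy hyx => ?_⟩, hhead⟩
    exact (hG y x w hyx (h₁ x (List.mem_of_mem_getLast? hx)) (hhead y hy)).1.symm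
  · rintro ⟨⟨hc₁, hc₂, -⟩, hhead⟩
    refine ⟨hc₁, ⟨fun y hy _ => (hhead y hy).symm, hc₂⟩, fun x hx y hy hyx => ?_⟩
    obtain rfl : w = y := by simpa using hy
    exact absurd hyx (h₁ x (List.mem_of_mem_getLast? hx)).not_gt

lemma IsNUIG.reach_insert_iff (hG : IsNUIG G) {h : Fin n} (h₁ : ∀ x ∈ h :: l₁, x < w)
    (h₂ : ∀ x ∈ l₂, x < w) (hd : (h :: l₁).Disjoint l₂) :
    Reach G {h} (l₁ ++ w :: l₂) ↔ Reach G {h} (l₁ ++ l₂) ∧ ∃ u ∈ h :: l₁, G.Adj u w := by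
  have hset : ({h} ∪ {x | x ∈ l₁} : Set (Fin n)) = {x | x ∈ h :: l₁} := by
    ext
    simp
  simp only [reach_append, hset, Reach]
  constructor
  · rintro ⟨hr₁, ⟨u, hu, huw⟩, hr₂⟩
    have hclique : NbrClique G w {x | x < w} := hG.nbrClique_of_lt fun a ha => by simpa using ha
    exact ⟨⟨hr₁, hclique.reach_of_insert (by simpa using h₁ u hu) (by simpa using h₂) hu huw
      (hd hu) hr₂⟩, u, hu, huw⟩
  · rintro ⟨⟨hr₁, hr₂⟩, hw⟩
    exact ⟨hr₁, hw, hr₂.mono (Set.subset_insert w _)⟩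

lemma IsNUIG.isReadingWord_insert_iff (hG : IsNUIG G) (h₁ : ∀ x ∈ l₁, x < w)
    (h₂ : ∀ x ∈ l₂, x < w) (hne : l₁ ++ l₂ ≠ []) :
    IsReadingWord G (l₁ ++ w :: l₂) ↔ IsReadingWord G (l₁ ++ l₂) ∧ (∃ u ∈ l₁, G.Adj u w) ∧
      ∀ y ∈ l₂.head?, G.Adj y w := by
  have hw : w ∉ l₁ ++ l₂ := fun h => (List.mem_append.1 h).elim (fun h => (h₁ w h).false)
    fun h => (h₂ w h).false
  have hnodup : (l₁ ++ w :: l₂).Nodup ↔ (l₁ ++ l₂).Nodup := by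
    rw [List.perm_middle.nodup_iff, List.nodup_cons, and_iff_right hw]
  have hchain := hG.isChain_insert_iff h₁ h₂
  cases l₁ with
  | nil =>
    obtain ⟨y, l, rfl⟩ := List.exists_cons_of_ne_nil hne
    have hyw : ¬ w < y := (h₂ y List.mem_cons_self).not_gt
    simp [IsReadingWord, hyw]
  | cons h t =>
    have hmin : (∀ x ∈ t ++ w :: l₂, h < x) ↔ ∀ x ∈ t ++ l₂, h < x := by
      rw [List.forall_mem_append, List.forall_mem_append, List.forall_mem_cons,
        and_iff_right (h₁ h List.mem_cons_self)]
    simp only [List.cons_append] at hnodup hchain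
    simp only [List.cons_append, IsReadingWord, hnodup, hmin, hchain]
    refine ⟨fun ⟨hn, hm, hr, hc, hh⟩ => ?_, fun ⟨⟨hn, hm, hr, hc⟩, hu, hh⟩ => ?_⟩
    · obtain ⟨hr, hu⟩ := (hG.reach_insert_iff h₁ h₂ (List.disjoint_of_nodup_append hn)).1 hr
      exact ⟨⟨hn, hm, hr, hc⟩, hu, hh⟩
    · exact ⟨hn, hm, (hG.reach_insert_iff h₁ h₂ (List.disjoint_of_nodup_append hn)).2 ⟨hr, hu⟩,
        hc, hh⟩

end Insertion

end ReadingWords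

section WordSums

/-- The words using each letter of `S` exactly once. -/
def wordsOn {V : Type*} [DecidableEq V] (S : Finset V) : Finset (List V) := S.val.lists.toFinset

lemma mem_wordsOn {V : Type*} [DecidableEq V] {S : Finset V} {l : List V} :
    l ∈ wordsOn S ↔ l.Nodup ∧ l.toFinset = S := by
  rw [wordsOn, Multiset.mem_toFinset, Multiset.mem_lists_iff]
  constructor
  · intro h
    have hl : l.Nodup := Multiset.coe_nodup.1 (h.subst S.nodup)
    exact ⟨hl, val_injective (by rw [List.toFinset_val, hl.dedup]; exact h.symm)⟩
  · rintro ⟨hl, rfl⟩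
    rw [List.toFinset_val, hl.dedup]
    rfl

lemma length_of_mem_wordsOn {V : Type*} [DecidableEq V] {S : Finset V} {l : List V}
    (hl : l ∈ wordsOn S) : l.length = #S := by
  obtain ⟨hnd, rfl⟩ := mem_wordsOn.1 hl
  exact (List.toFinset_card_of_nodup hnd).symm

lemma append_mem_wordsOn_iff {V : Type*} [DecidableEq V] {S : Finset V} {l₁ l₂ : List V} :
    l₁ ++ l₂ ∈ wordsOn S ↔
      l₂.toFinset ⊆ S ∧ l₁ ∈ wordsOn (S \ l₂.toFinset) ∧ l₂ ∈ wordsOn l₂.toFinset := by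
  simp only [mem_wordsOn, List.nodup_append', List.toFinset_append, and_true]
  rw [← List.disjoint_toFinset_iff_disjoint]
  constructor
  · rintro ⟨⟨h₁, h₂, hd⟩, rfl⟩
    exact ⟨subset_union_right, ⟨h₁, (union_sdiff_cancel_right hd).symm⟩, h₂⟩
  · rintro ⟨hS, ⟨h₁, hl₁⟩, h₂⟩
    rw [hl₁]
    exact ⟨⟨h₁, h₂, sdiff_disjoint⟩, sdiff_union_of_subset hS⟩

lemma sum_wordsOn_take_drop {V M : Type*} [DecidableEq V] [AddCommMonoid M] {S : Finset V}
    {k : ℕ} (hk : k ≤ #S) (F : List V → List V → M) :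
    ∑ l ∈ wordsOn S, F (l.take (#S - k)) (l.drop (#S - k)) =
      ∑ B ∈ S.powersetCard k, ∑ l₁ ∈ wordsOn (S \ B), ∑ l₂ ∈ wordsOn B, F l₁ l₂ := by
  have hcard {B : Finset V} {l : List V} (hB : B ∈ S.powersetCard k)
      (hl : l ∈ wordsOn (S \ B)) : l.length = #S - k := by
    rw [mem_powersetCard] at hB
    rw [length_of_mem_wordsOn hl, card_sdiff_of_subset hB.1, hB.2]
  simp only [sum_sigma']
  refine sum_bij' (fun l _ => ⟨(l.drop (#S - k)).toFinset, l.take (#S - k), l.drop (#S - k)⟩)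
    (fun p _ => p.2.1 ++ p.2.2) ?_ ?_ ?_ ?_ fun _ _ => rfl
  · intro l hl
    have hlen : l.length = #S := length_of_mem_wordsOn hl
    rw [← List.take_append_drop (#S - k) l, append_mem_wordsOn_iff] at hl
    obtain ⟨hS, h₁, h₂⟩ := hl
    refine mem_sigma.2 ⟨mem_powersetCard.2 ⟨hS, ?_⟩, mem_sigma.2 ⟨h₁, h₂⟩⟩
    rw [← length_of_mem_wordsOn h₂, List.length_drop, hlen]
    omega
  · rintro ⟨B, l₁, l₂⟩ hp
    simp only [mem_sigma] at hp
    obtain ⟨hB, h₁, h₂⟩ := hp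
    obtain ⟨-, rfl⟩ := mem_wordsOn.1 h₂
    exact append_mem_wordsOn_iff.2 ⟨(mem_powersetCard.1 hB).1, h₁, h₂⟩
  · exact fun l _ => List.take_append_drop _ l
  · rintro ⟨B, l₁, l₂⟩ hp
    simp only [mem_sigma] at hp
    obtain ⟨hB, h₁, h₂⟩ := hp
    obtain ⟨-, rfl⟩ := mem_wordsOn.1 h₂
    have hl₁ := hcard hB h₁
    simp only [List.take_left' hl₁, List.drop_left' hl₁]

open scoped Classical in
/-- The reading words with set of letters `S`. -/
noncomputable def readingWords {V : Type*} [LinearOrder V] (G : SimpleGraph V) (S : Finset V) :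
    Finset (List V) :=
  {l ∈ wordsOn S | IsReadingWord G l}

lemma mem_readingWords {V : Type*} [LinearOrder V] {G : SimpleGraph V} {S : Finset V}
    {l : List V} : l ∈ readingWords G S ↔ IsReadingWord G l ∧ l.toFinset = S := by
  classical
  rw [readingWords, mem_filter, mem_wordsOn, and_comm]
  exact and_congr_right fun hl => and_iff_right hl.nodup

lemma readingWords_singleton {V : Type*} [LinearOrder V] {G : SimpleGraph V} (w : V) :
    readingWords G {w} = {[w]} := by
  ext l
  rw [mem_readingWords, mem_singleton]
  constructor
  · rintro ⟨hl, hw⟩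
    have hcoe : (l : Multiset V) = {w} := by
      rw [← singleton_val, ← hw, List.toFinset_val, hl.nodup.dedup]
    exact Multiset.coe_eq_singleton.1 hcoe
  · rintro rfl
    simp [IsReadingWord, Reach]

lemma take_append_cons_drop_inj {α : Type*} {w : α} {l l' : List α} {i i' : ℕ} (hw : w ∉ l)
    (hi : i ≤ l.length) (hi' : i' ≤ l'.length)
    (h : l.take i ++ w :: l.drop i = l'.take i' ++ w :: l'.drop i') : l = l' ∧ i = i' := by
  obtain ⟨htake, -, hdrop⟩ := (List.append_cons_inj_of_notMem
    (fun h => hw (List.mem_of_mem_take h)) (fun h => hw (List.mem_of_mem_drop h))).1 h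
  refine ⟨?_, ?_⟩
  · rw [← List.take_append_drop i l, ← List.take_append_drop i' l', htake, hdrop]
  · simpa [hi, hi'] using congrArg List.length htake

variable {n : ℕ} {G : SimpleGraph (Fin n)} [DecidableRel G.Adj] {w : Fin n} {S : Finset (Fin n)}

lemma IsNUIG.mem_readingWords_insert_iff (hG : IsNUIG G) (hS : S.Nonempty)
    (hw : ∀ a ∈ S, a < w) {l₁ l₂ : List (Fin n)} :
    l₁ ++ w :: l₂ ∈ readingWords G (insert w S) ↔
      l₁ ++ l₂ ∈ readingWords G S ∧ l₁.length ∈ slots (G.Adj · w) (l₁ ++ l₂) := by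
  have hwS : w ∉ S := fun h => (hw w h).false
  have hinsert : (l₁ ++ w :: l₂).toFinset = insert w (l₁ ++ l₂).toFinset := by
    rw [List.toFinset_append, List.toFinset_cons, union_insert, List.toFinset_append]
  have hiff (h : (l₁ ++ l₂).toFinset = S) := by
    have hlt : ∀ x ∈ l₁ ++ l₂, x < w := fun x hx => hw x (h ▸ List.mem_toFinset.2 hx)
    exact hG.isReadingWord_insert_iff (fun x hx => hlt x (List.mem_append_left _ hx))
      (fun x hx => hlt x (List.mem_append_right _ hx))
      (by rintro hnil; simp [← h, hnil] at hS)
  have hslots : l₁.length ∈ slots (G.Adj · w) (l₁ ++ l₂) ↔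
      (∃ u ∈ l₁, G.Adj u w) ∧ ∀ y ∈ l₂.head?, G.Adj y w := by
    rw [mem_slots, List.take_left, List.drop_left]
    exact and_iff_right (by simp)
  rw [mem_readingWords, mem_readingWords, hslots]
  constructor
  · rintro ⟨hl, hset⟩
    have hwl : w ∉ l₁ ++ l₂ := (List.nodup_cons.1 (List.perm_middle.nodup_iff.1 hl.nodup)).1
    have h : (l₁ ++ l₂).toFinset = S := by
      rw [← erase_insert hwS, ← hset, hinsert, erase_insert (by simpa using hwl)]
    obtain ⟨hl, hslot⟩ := (hiff h).1 hl
    exact ⟨⟨hl, h⟩, hslot⟩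
  · rintro ⟨⟨hl, h⟩, hslot⟩
    exact ⟨(hiff h).2 ⟨hl, hslot⟩, by rw [hinsert, h]⟩

lemma IsNUIG.sum_readingWords_insert {M : Type*} [AddCommMonoid M] (hG : IsNUIG G)
    (hS : S.Nonempty) (hw : ∀ a ∈ S, a < w) (F : List (Fin n) → M) :
    ∑ l ∈ readingWords G (insert w S), F l =
      ∑ l ∈ readingWords G S, ∑ i ∈ slots (G.Adj · w) l, F (l.take i ++ w :: l.drop i) := by
  have hslot {l : List (Fin n)} {i : ℕ} (hi : i ∈ slots (G.Adj · w) l) : i ≤ l.length :=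
    (mem_slots.1 hi).1
  rw [sum_sigma', eq_comm]
  refine sum_bij (fun p _ => p.1.take p.2 ++ w :: p.1.drop p.2) ?_ ?_ ?_ fun _ _ => rfl
  · rintro ⟨l, i⟩ hp
    obtain ⟨hl, hi⟩ := mem_sigma.1 hp
    rw [hG.mem_readingWords_insert_iff hS hw, List.take_append_drop,
      List.length_take_of_le (hslot hi)]
    exact ⟨hl, hi⟩
  · rintro ⟨l, i⟩ hp ⟨l', i'⟩ hp' h
    obtain ⟨hl, hi⟩ := mem_sigma.1 hp
    have hwl : w ∉ l := fun h =>
      (hw w ((mem_readingWords.1 hl).2 ▸ List.mem_toFinset.2 h)).false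
    obtain ⟨rfl, rfl⟩ :=
      take_append_cons_drop_inj hwl (hslot hi) (hslot (mem_sigma.1 hp').2) h
    rfl
  · intro l hl
    obtain ⟨l₁, l₂, rfl⟩ := List.append_of_mem
      (List.mem_toFinset.1 ((mem_readingWords.1 hl).2 ▸ mem_insert_self w S))
    exact ⟨⟨l₁ ++ l₂, l₁.length⟩, mem_sigma.2 ((hG.mem_readingWords_insert_iff hS hw).1 hl),
      by simp⟩

lemma IsNUIG.indS_eq_sum_readingWords (hG : IsNUIG G) (hS : S.Nonempty) :
    indS G S = ∑ l ∈ readingWords G S, X ^ wordInv G l := by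
  induction S using Finset.induction_on_max with
  | empty => simp at hS
  | insert w S hw ih =>
    rcases S.eq_empty_or_nonempty with rfl | hne
    · rw [insert_empty, readingWords_singleton, sum_singleton, indS_singleton]
      simp [wordInv]
    · rw [indS_insert_of_lt hne hw, ih hne, sum_mul, hG.sum_readingWords_insert hne hw]
      refine sum_congr rfl fun l hl => ?_
      obtain ⟨hword, rfl⟩ := mem_readingWords.1 hl
      simp only [List.mem_toFinset] at hw
      rw [degIn, ← countP_eq_card_filter hword.nodup, ← sum_slots, mul_sum]
      refine sum_congr rfl fun i _ => ?_
      rw [← pow_add, wordInv_insert_of_lt (fun x hx => hw x (List.mem_of_mem_take hx))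
        (fun x hx => hw x (List.mem_of_mem_drop hx)), List.take_append_drop]

lemma IsNUIG.sum_readingWords_append (hG : IsNUIG G) {A B : Finset (Fin n)} (hA : A.Nonempty)
    (hB : B.Nonempty) :
    ∑ l₁ ∈ readingWords G A, ∑ l₂ ∈ readingWords G B, X ^ wordInv G (l₁ ++ l₂) =
      X ^ ascBetween G B A * indS G B * indS G A := by
  rw [mul_assoc, mul_comm (indS G B), hG.indS_eq_sum_readingWords hA,
    hG.indS_eq_sum_readingWords hB, sum_mul_sum, mul_sum]
  refine sum_congr rfl fun l₁ hl₁ => ?_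
  rw [mul_sum]
  refine sum_congr rfl fun l₂ hl₂ => ?_
  obtain ⟨hw₁, rfl⟩ := mem_readingWords.1 hl₁
  obtain ⟨hw₂, rfl⟩ := mem_readingWords.1 hl₂
  rw [wordInv_append hw₁.nodup hw₂.nodup]
  ring

end WordSums

section ReadingTrees

lemma isTree_of_parent {V : Type*} [Finite V] {H : SimpleGraph V} {r : V} (pos : V → ℕ)
    (par : V → V) (hpos : ∀ v ≠ r, pos (par v) < pos v) (hpar : ∀ v ≠ r, H.Adj v (par v))
    (hedge : ∀ x y, H.Adj x y → (x ≠ r ∧ y = par x) ∨ (y ≠ r ∧ x = par y)) : H.IsTree := by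
  classical
  have hconn : H.Connected := by
    refine SimpleGraph.connected_iff_exists_forall_reachable H |>.2 ⟨r, fun v => ?_⟩
    induction hm : pos v using Nat.strong_induction_on generalizing v with
    | _ m ih =>
      rcases eq_or_ne v r with rfl | hv
      · exact SimpleGraph.Reachable.refl _
      · exact (ih _ (hm ▸ hpos v hv) _ rfl).trans (hpar v hv).symm.reachable
  have hcard : Nat.card H.edgeSet ≤ Nat.card {v // v ≠ r} := by
    refine Nat.card_le_card_of_surjective (fun v => ⟨s(v.1, par v.1), hpar v v.2⟩) ?_
    rintro ⟨e, he⟩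
    induction e with
    | h x y =>
      rcases hedge x y he with ⟨hx, rfl⟩ | ⟨hy, rfl⟩
      · exact ⟨⟨x, hx⟩, rfl⟩
      · exact ⟨⟨y, hy⟩, Subtype.ext Sym2.eq_swap⟩
  have hV : Nat.card {v // v ≠ r} + 1 = Nat.card V := by
    rw [← Finite.card_option, Nat.card_congr (Equiv.optionSubtypeNe r)]
  exact SimpleGraph.isTree_iff_connected_and_card.2
    ⟨hconn, by have := hconn.card_vert_le_card_edgeSet_add_one; omega⟩

section Parent

variable {V : Type*} [LinearOrder V] {l : List V} {p p' x z : V}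

/-- `p` is the parent of the letter `x` in the tree read as the word `l`: the last larger letter
before `x` if there is one, and the largest letter before `x` otherwise. -/
def IsParent (l : List V) (p x : V) : Prop :=
  p ∈ l ∧ x ∈ l ∧ l.idxOf p < l.idxOf x ∧
    ((x < p ∧ ∀ z ∈ l, l.idxOf p < l.idxOf z → l.idxOf z < l.idxOf x → z < x) ∨
      (p < x ∧ ∀ z ∈ l, l.idxOf z < l.idxOf x → z ≤ p))

lemma IsParent.idxOf_lt (h : IsParent l p x) : l.idxOf p < l.idxOf x := h.2.2.1

lemma IsParent.lt_of_gt (h : IsParent l p x) (hxp : x < p) (hz : z ∈ l)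
    (hpz : l.idxOf p < l.idxOf z) (hzx : l.idxOf z < l.idxOf x) : z < x := by
  rcases h.2.2.2 with h | h
  · exact h.2 z hz hpz hzx
  · exact absurd h.1 hxp.not_gt

lemma IsParent.le_of_lt (h : IsParent l p x) (hpx : p < x) (hz : z ∈ l)
    (hzx : l.idxOf z < l.idxOf x) : z ≤ p := by
  rcases h.2.2.2 with h | h
  · exact absurd h.1 hpx.not_gt
  · exact h.2 z hz hzx

lemma IsParent.lt_of_lt (h : IsParent l p x) (hz : z ∈ l) (hzx : l.idxOf z < l.idxOf x)
    (hxz : x < z) : x < p := by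
  rcases h.2.2.2 with h | h
  · exact h.1
  · exact hxz.trans_le (h.2 z hz hzx)

lemma IsParent.eq (h : IsParent l p x) (h' : IsParent l p' x) : p = p' := by
  have hidx {p p' : V} (h : IsParent l p x) (h' : IsParent l p' x) (hxp : x < p) :
      l.idxOf p' ≤ l.idxOf p := by
    by_contra! hlt
    exact (h.lt_of_gt hxp h'.1 hlt h'.idxOf_lt).not_gt (h'.lt_of_lt h.1 h.idxOf_lt hxp)
  rcases h.2.2.2 with ⟨hxp, -⟩ | ⟨hpx, -⟩ <;> rcases h'.2.2.2 with ⟨hxp', -⟩ | ⟨hpx', -⟩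
  · exact (List.idxOf_inj h.1).1 (le_antisymm (hidx h' h hxp') (hidx h h' hxp))
  · exact absurd (h'.lt_of_lt h.1 h.idxOf_lt hxp) hpx'.not_gt
  · exact absurd (h.lt_of_lt h'.1 h'.idxOf_lt hxp') hpx.not_gt
  · exact le_antisymm (h'.le_of_lt hpx' h.1 h.idxOf_lt) (h.le_of_lt hpx h'.1 h'.idxOf_lt)

lemma exists_isParent (hx : x ∈ l) (hpos : 0 < l.idxOf x) : ∃ p, IsParent l p x := by
  have hne {z : V} (hzx : l.idxOf z < l.idxOf x) : z ≠ x := by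
    rintro rfl
    exact hzx.false
  by_cases hlarger : ∃ z ∈ l, l.idxOf z < l.idxOf x ∧ x < z
  · obtain ⟨z, hz, hlarger⟩ := hlarger
    obtain ⟨p, hp, hmax⟩ := exists_max_image {z ∈ l.toFinset | l.idxOf z < l.idxOf x ∧ x < z}
      l.idxOf ⟨z, by simpa using ⟨hz, hlarger⟩⟩
    simp only [mem_filter, List.mem_toFinset] at hp hmax
    refine ⟨p, hp.1, hx, hp.2.1, Or.inl ⟨hp.2.2, fun z hz hpz hzx => ?_⟩⟩
    exact (hne hzx).lt_of_le (not_lt.1 fun hxz => (hmax z ⟨hz, hzx, hxz⟩).not_gt hpz)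
  · push Not at hlarger
    have hhead : l[0]'(List.length_pos_of_mem hx) ∈ l := List.getElem_mem _
    have hhead0 : l.idxOf (l[0]'(List.length_pos_of_mem hx)) = 0 := by
      cases l with
      | nil => simp at hx
      | cons => simp
    obtain ⟨p, hp, hmax⟩ := exists_max_image {z ∈ l.toFinset | l.idxOf z < l.idxOf x} id
      ⟨_, mem_filter.2 ⟨List.mem_toFinset.2 hhead, by rwa [hhead0]⟩⟩
    simp only [mem_filter, List.mem_toFinset, id] at hp hmax
    exact ⟨p, hp.1, hx, hp.2, Or.inr ⟨(hne hp.2).lt_of_le (hlarger p hp.1 hp.2),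
      fun z hz hzx => hmax z ⟨hz, hzx⟩⟩⟩

lemma existsUnique_lt_isParent_of_exists_gt {v : V} (hv : v ∈ l)
    (hlarger : ∃ z ∈ l, l.idxOf z < l.idxOf v ∧ v < z) :
    ∃! w, v < w ∧ (IsParent l v w ∨ IsParent l w v) := by
  obtain ⟨z, hz, hzv, hvz⟩ := hlarger
  obtain ⟨p, hp⟩ := exists_isParent hv (Nat.zero_le _ |>.trans_lt hzv)
  have hvp : v < p := hp.lt_of_lt hz hzv hvz
  refine ⟨p, ⟨hvp, Or.inr hp⟩, ?_⟩
  rintro y ⟨hvy, hy | hy⟩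
  · exact absurd (hy.le_of_lt hvy hp.1 (hp.idxOf_lt.trans hy.idxOf_lt)) hvp.not_ge
  · exact hy.eq hp

lemma existsUnique_lt_isParent_of_forall_le {v : V} (hv : v ∈ l) (hex : ∃ u ∈ l, v < u)
    (hlarger : ∀ z ∈ l, l.idxOf z < l.idxOf v → z ≤ v) :
    ∃! w, v < w ∧ (IsParent l v w ∨ IsParent l w v) := by
  obtain ⟨u, hu, hvu⟩ := hex
  obtain ⟨w, hw, hmin⟩ := exists_min_image {z ∈ l.toFinset | v < z} l.idxOf
    ⟨u, by simpa using ⟨hu, hvu⟩⟩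
  simp only [mem_filter, List.mem_toFinset] at hw hmin
  obtain ⟨hw, hvw⟩ := hw
  have hle : ∀ z ∈ l, l.idxOf z < l.idxOf w → z ≤ v := fun z hz hzw =>
    not_lt.1 fun hvz => (hmin z ⟨hz, hvz⟩).not_gt hzw
  have hidx : l.idxOf v < l.idxOf w := by
    refine (not_lt.1 fun h => hvw.not_ge (hlarger w hw h)).lt_of_ne fun h => ?_
    exact hvw.ne ((List.idxOf_inj hv).1 h)
  refine ⟨w, ⟨hvw, Or.inl ⟨hv, hw, hidx, Or.inr ⟨hvw, hle⟩⟩⟩, ?_⟩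
  rintro y ⟨hvy, hy | hy⟩
  · refine (List.idxOf_inj hy.2.1).1 (le_antisymm ?_ (hmin y ⟨hy.2.1, hvy⟩))
    exact not_lt.1 fun h => hvw.not_ge (hy.le_of_lt hvy hw h)
  · exact absurd (hlarger y hy.1 hy.idxOf_lt) hvy.not_ge

lemma existsUnique_lt_isParent {v : V} (hv : v ∈ l) (hex : ∃ u ∈ l, v < u) :
    ∃! w, v < w ∧ (IsParent l v w ∨ IsParent l w v) := by
  by_cases hlarger : ∃ z ∈ l, l.idxOf z < l.idxOf v ∧ v < z
  · exact existsUnique_lt_isParent_of_exists_gt hv hlarger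
  · push Not at hlarger
    exact existsUnique_lt_isParent_of_forall_le hv hex hlarger

lemma IsParent.le_of_unread {a b u : V} (h : IsParent l u b) (ha : a ∈ l)
    (hua : l.idxOf u < l.idxOf a) (hab : l.idxOf a ≤ l.idxOf b) : a ≤ b := by
  rcases hab.eq_or_lt with hab | hab
  · exact ((List.idxOf_inj ha).1 hab).le
  · rcases h.2.2.2 with hu | hu
    · exact (hu.2 a ha hua hab).le
    · exact (hu.2 a ha hab).trans hu.1.le

end Parent

variable {n : ℕ} {G : SimpleGraph (Fin n)} {l : List (Fin n)} {p x : Fin n}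

lemma IsParent.adj (hG : IsNUIG G) (hl : IsReadingWord G l) (h : IsParent l p x) :
    G.Adj p x := by
  obtain ⟨hnd, -, -, hreach, hchain⟩ := isReadingWord_iff.1 hl
  obtain ⟨hp, hx, hidx, ⟨hxp, hbetween⟩ | ⟨hpx, hmax⟩⟩ := h
  · have hlen : l.idxOf p + 1 < l.length :=
      lt_of_le_of_lt hidx (List.idxOf_lt_length_iff.2 hx)
    have hdescent := hchain _ hlen
    have hyl : l[l.idxOf p + 1] ∈ l := List.getElem_mem _
    have hyi : l.idxOf l[l.idxOf p + 1] = l.idxOf p + 1 := hnd.idxOf_getElem _ _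
    rw [List.getElem_idxOf] at hdescent
    generalize l[l.idxOf p + 1] = y at hdescent hyl hyi
    rcases eq_or_ne y x with rfl | hyx
    · exact hdescent hxp
    · have hne : l.idxOf y ≠ l.idxOf x := fun h => hyx ((List.idxOf_inj hyl).1 h)
      have hyx : y < x := hbetween y hyl (by omega) (by omega)
      exact (hG y x p hyx hxp (hdescent (hyx.trans hxp)).symm).2.symm
  · obtain ⟨u, hu, hux⟩ := hreach _ (List.idxOf_lt_length_iff.2 hx) (by omega)
    have hul := List.mem_of_mem_take hu
    rw [List.mem_take_iff_idxOf_lt hul] at hu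
    rw [List.getElem_idxOf] at hux
    rcases (hmax u hul hu).eq_or_lt with rfl | hup
    · exact hux
    · exact (hG u p x hup hpx hux).2

/-- The tree read as the word `l`. -/
def readingTree (hG : IsNUIG G) (hl : IsReadingWord G l) : G.Subgraph where
  verts := {x | x ∈ l}
  Adj x y := IsParent l x y ∨ IsParent l y x
  adj_sub := by
    rintro x y (h | h)
    · exact h.adj hG hl
    · exact (h.adj hG hl).symm
  edge_vert := by
    rintro x y (h | h)
    · exact h.1
    · exact h.2.1
  symm := ⟨fun _ _ => Or.symm⟩

lemma readingTree_isTree (hG : IsNUIG G) (hl : IsReadingWord G l) :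
    (readingTree hG hl).coe.IsTree := by
  obtain ⟨hnd, h0, -, -, -⟩ := isReadingWord_iff.1 hl
  have hroot : l.idxOf l[0] = 0 := hnd.idxOf_getElem 0 h0
  let r : (readingTree hG hl).verts := ⟨l[0], List.getElem_mem h0⟩
  have hex (v : (readingTree hG hl).verts) :
      ∃ u : (readingTree hG hl).verts, v ≠ r → IsParent l u v := by
    by_cases hv : v = r
    · exact ⟨v, fun h => absurd hv h⟩
    · obtain ⟨p, hp⟩ := exists_isParent v.2 <| Nat.pos_of_ne_zero fun h =>
        hv (Subtype.ext ((List.idxOf_inj v.2).1 (h.trans hroot.symm)))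
      exact ⟨⟨p, hp.1⟩, fun _ => hp⟩
  have hne {u v : (readingTree hG hl).verts} (h : IsParent l u v) : v ≠ r := by
    rintro rfl
    exact (Nat.zero_le _).not_gt (h.idxOf_lt.trans_eq hroot)
  choose par hpar using hex
  refine isTree_of_parent (fun v => l.idxOf v.1) par (fun v hv => (hpar v hv).idxOf_lt)
    (fun v hv => Or.inr (hpar v hv)) ?_
  rintro x y (h | h)
  · exact Or.inr ⟨hne h, Subtype.ext (h.eq (hpar y (hne h)))⟩
  · exact Or.inl ⟨hne h, Subtype.ext (h.eq (hpar x (hne h)))⟩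

lemma readingTree_isDecreasingTree (hG : IsNUIG G) (hl : IsReadingWord G l) :
    IsDecreasingTree G (readingTree hG hl) :=
  ⟨List.exists_mem_of_ne_nil l hl.ne_nil, readingTree_isTree hG hl,
    fun _ hv hex => existsUnique_lt_isParent hv hex⟩

lemma readingTree_isReadList (hG : IsNUIG G) (hl : IsReadingWord G l) :
    IsReadList (readingTree hG hl) l := by
  obtain ⟨hnd, h0, hmin, -, -⟩ := isReadingWord_iff.1 hl
  refine ⟨hnd, fun _ => Iff.rfl, fun _ v hv => hmin v hv, fun t ht ht0 => ?_⟩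
  have hal : l[t] ∈ l := List.getElem_mem ht
  have hidx : l.idxOf l[t] = t := hnd.idxOf_getElem _ _
  rw [List.get_eq_getElem]
  generalize l[t] = a at hal hidx
  subst hidx
  have hread : ∀ u ∈ l, u ∈ l.take (l.idxOf a) ↔ l.idxOf u < l.idxOf a := fun _ =>
    List.mem_take_iff_idxOf_lt
  obtain ⟨p, hp⟩ := exists_isParent hal ht0
  refine ⟨⟨hal, (hread a hal).not.2 (lt_irrefl _), p, (hread p hp.1).2 hp.idxOf_lt,
    Or.inl hp⟩, ?_⟩
  rintro b ⟨hb, hab, u, hu, hub | hbu⟩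
  · exact hub.le_of_unread hal ((hread u hub.1).1 hu) (not_lt.1 ((hread b hb).not.1 hab))
  · exact absurd (hbu.idxOf_lt.trans ((hread u hbu.2.1).1 hu)) ((hread b hb).not.1 hab)

lemma IsDecTreeList.isReadingWord (h : IsDecTreeList G l) : IsReadingWord G l := by
  obtain ⟨T, ⟨⟨v, hv⟩, -, -⟩, hnd, hmem, hmin, hread⟩ := h
  have h0 : 0 < l.length := List.length_pos_of_mem ((hmem v).2 hv)
  refine isReadingWord_iff.2 ⟨hnd, h0, fun x hx => hmin h0 x ((hmem x).1 hx),
    fun t ht ht0 => ?_, fun t ht hlt => ?_⟩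
  · obtain ⟨-, -, u, hu, hut⟩ := (hread t ht ht0).1
    exact ⟨u, hu, hut.adj_sub⟩
  · obtain ⟨hv, hnt, u, hu, hut⟩ := (hread (t + 1) ht t.succ_pos).1
    rw [List.get_eq_getElem] at hv hnt hut
    rw [List.take_succ_eq_append_getElem (by omega), List.mem_append, List.mem_singleton] at hu hnt
    rcases hu with hu | rfl
    · have ht0 : 0 < t := Nat.pos_of_ne_zero fun h => by simp [h] at hu
      exact absurd hlt ((hread t (by omega) ht0).2 ⟨hv, fun h => hnt (Or.inl h), u, hu, hut⟩).not_gt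
    · exact hut.adj_sub

lemma IsNUIG.isDecTreeList_iff (hG : IsNUIG G) : IsDecTreeList G l ↔ IsReadingWord G l :=
  ⟨IsDecTreeList.isReadingWord, fun hl =>
    ⟨readingTree hG hl, readingTree_isDecreasingTree hG hl, readingTree_isReadList hG hl⟩⟩

end ReadingTrees

section TreePairs

attribute [local instance] LieRing.ofAssociativeRing

variable {n : ℕ} {G : SimpleGraph (Fin n)} [DecidableRel G.Adj]

lemma IsNUIG.skG_eq_sum_readingWords (hG : IsNUIG G) (hn : 0 < n) {k : ℕ} (hkn : k ≤ n) :
    skG G hn k = ∑ B ∈ powersetCard k univ, ∑ l₁ ∈ readingWords G (univ \ B),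
      ∑ l₂ ∈ readingWords G B, if ⟨0, hn⟩ ∉ B then X ^ wordInv G (l₁ ++ l₂) else 0 := by
  classical
  have hword : skG G hn k = ∑ l ∈ wordsOn (univ : Finset (Fin n)),
      if IsReadingWord G (l.take (n - k)) ∧ IsReadingWord G (l.drop (n - k)) ∧
        ⟨0, hn⟩ ∈ l.take (n - k) then
          X ^ wordInv G (l.take (n - k) ++ l.drop (n - k)) else 0 := by
    rw [← sum_filter, skG]
    simp only [invG_eq_wordInv, hG.isDecTreeList_iff, List.take_append_drop]
    exact finsum_cond_eq_sum_of_cond_iff _ fun {l} _ => by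
      rw [mem_filter, mem_wordsOn, and_assoc]
  have hsplit := sum_wordsOn_take_drop (hkn.trans_eq (card_fin n).symm) fun l₁ l₂ =>
    if IsReadingWord G l₁ ∧ IsReadingWord G l₂ ∧ ⟨0, hn⟩ ∈ l₁ then
      (X : ℤ[X]) ^ wordInv G (l₁ ++ l₂) else 0
  rw [card_fin] at hsplit
  rw [hword, hsplit]
  refine sum_congr rfl fun B _ => ?_
  simp only [readingWords, sum_filter]
  refine sum_congr rfl fun l₁ hl₁ => ?_
  have hmem : ⟨0, hn⟩ ∈ l₁ ↔ ⟨0, hn⟩ ∉ B := by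
    rw [← List.mem_toFinset, (mem_wordsOn.1 hl₁).2, mem_sdiff]
    exact and_iff_right (mem_univ _)
  by_cases h₁ : IsReadingWord G l₁ <;> simp [h₁, hmem, ite_and]

lemma IsNUIG.skG_eq (hG : IsNUIG G) (hn : 0 < n) {k : ℕ} (hk : k ≠ 0) (hkn : k < n) :
    skG G hn k = (dec G k * marked ⟨0, hn⟩ (dec G (n - k))) univ := by
  rw [hG.skG_eq_sum_readingWords hn hkn.le, mul_apply, splitSum, powerset_univ,
    ← sum_subset (subset_univ (powersetCard k univ)) fun B _ hB => ?_]
  · refine sum_congr rfl fun B hB => ?_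
    have hcard : #B = k := (mem_powersetCard.1 hB).2
    have hcompl : #(univ \ B) = n - k := by
      rw [card_sdiff_of_subset (subset_univ B), hcard, card_fin]
    rw [marked_apply, dec, dec, grade_apply, grade_apply, if_pos hcard, if_pos hcompl]
    by_cases h0 : ⟨0, hn⟩ ∈ B
    · simp [h0]
    · simp only [h0, not_false_eq_true, if_true, mem_sdiff, mem_univ, and_self]
      exact hG.sum_readingWords_append (card_pos.1 (hcompl ▸ Nat.sub_pos_of_lt hkn))
        (card_pos.1 (hcard ▸ Nat.pos_of_ne_zero hk))
  · rw [dec, grade_apply, if_neg fun h => hB (mem_powersetCard.2 ⟨subset_univ B, h⟩), mul_zero,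
      zero_mul]

lemma IsNUIG.dec_mul_dec_univ (hG : IsNUIG G) (hn : 0 < n) {k : ℕ} (hk : k ≠ 0) (hkn : k < n) :
    (dec G (n - k) * dec G k) univ =
      skG G hn k + skG G hn (n - k) + (X - 1) * sG G := by
  have hderiv : (dec G (n - k) * dec G k) univ =
      (marked ⟨0, hn⟩ (dec G (n - k)) * dec G k) univ +
        (dec G (n - k) * marked ⟨0, hn⟩ (dec G k)) univ := by
    rw [← add_apply, ← marked_mul, marked_apply, if_pos (mem_univ _)]
  have hcomm : (marked ⟨0, hn⟩ (dec G (n - k)) * dec G k) univ -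
      (dec G k * marked ⟨0, hn⟩ (dec G (n - k))) univ = (X - 1) * sG G := by
    rw [← sub_apply, ← Ring.lie_def, hG.lie_marked_dec (fun w => Fin.le_def.2 (Nat.zero_le _))
      (by omega) hk, Nat.sub_add_cancel hkn.le, smul_apply, marked_apply, if_pos (mem_univ _),
      dec_univ]
  have hflip := hG.skG_eq hn (k := n - k) (by omega) (by omega)
  rw [Nat.sub_sub_self hkn.le] at hflip
  rw [hderiv, hG.skG_eq hn hk hkn, hflip]
  linear_combination hcomm

end TreePairs

/-- if `X_G(x;q) = Σ_μ c_μ(q) e_μ` for a natural unit interval graph `G`,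
then for `1 ≤ k < n/2` the coefficient of `e_{(n-k,k)}` is
`[n-k]_q([k]_q s_k(G) - s(G)) + [k]_q([n-k]_q s_{n-k}(G) - s(G))`. -/
theorem coeff_esymm_two_part {n : ℕ} (G : SimpleGraph (Fin n)) (hG : IsNUIG G)
    (k : ℕ) (hk1 : 1 ≤ k) (hk2 : 2 * k < n)
    (c : Nat.Partition n → Polynomial ℤ)
    (hc : ∀ N : ℕ, cqf G N = ∑ μ : Nat.Partition n,
      MvPolynomial.C (c μ) * MvPolynomial.esymmPart (Fin N) (Polynomial ℤ) μ) :
    c ⟨{n - k, k}, by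
        intro i hi
        simp only [Multiset.mem_cons, Multiset.mem_singleton, Multiset.insert_eq_cons] at hi
        rcases hi with h | h <;> omega, by
        simp only [Multiset.insert_eq_cons, Multiset.sum_cons, Multiset.sum_singleton]
        omega⟩ =
      qint (n - k) * (qint k * skG G (by omega) k - sG G) +
        qint k * (qint (n - k) * skG G (by omega) (n - k) - sG G) := by
  classical
  have hn : 0 < n := by omega
  rw [IsEsymmExpansion.coeff_two_part hc hG (a := n - k) (b := k) (by omega) (by omega)
    (by omega) (by omega) rfl, hG.dec_mul_dec_univ hn (by omega) (by omega), dec_univ]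
  have hqint := qint_add (n - k) k
  rw [Nat.sub_add_cancel (by omega)] at hqint
  linear_combination (-sG G) * hqint + qint k * sG G * X_sub_one_mul_qint (n - k)
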